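/- Let p be a prime, q a power of p. Let w be a real number with w > (5+√17)/2 if p ≠ 2 and w > (9+√65)/2 if p = 2. Let b, c ∈ F_q[T] be distinct polynomials of degree at least one. Define a_{n,w} = c if n = ⌊w^i⌋ for some integer i ≥ 0, and a_{n,w} = b otherwise, and set ξ_w := [0, a_{1,w}, a_{2,w}, …] ∈ F_q((T^{-1})). Then w_2*(ξ_w) = w − 1 and w_2(ξ_w) = w. -/

import Mathlib

open Polynomial Filter
open scoped ENNReal

noncomputable section

namespace Ooto

variable (Fq : Type) [Field Fq] [Fintype Fq]

/-- `F_q((T⁻¹))`, realized as formal Laurent series in the variable `X = T⁻¹`. -/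
abbrev K := LaurentSeries Fq

/-- The element `T = X⁻¹` of `F_q((T⁻¹))`. -/
def TT : K Fq := HahnSeries.single (-1 : ℤ) (1 : Fq)

/-- The natural embedding of `F_q[T]` into `F_q((T⁻¹))`, sending `T` to `T`. -/
def polyToK : Polynomial Fq →+* K Fq := Polynomial.eval₂RingHom HahnSeries.C (TT Fq)

open Classical in
/-- The absolute value on `F_q((T⁻¹))`: `|0| = 0` and `|ξ| = q^{-N}` where `N` is the order
of `ξ` as a series in `T⁻¹`. -/
def kabs (f : K Fq) : ℝ := if f = 0 then 0 else (Fintype.card Fq : ℝ) ^ (-f.order)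

/-- A fixed algebraic closure of `F_q((T⁻¹))`. -/
abbrev L := AlgebraicClosure (K Fq)

def toL : K Fq →+* L Fq := algebraMap (K Fq) (L Fq)

def φ : Polynomial Fq →+* L Fq := (toL Fq).comp (polyToK Fq)

/-- Evaluation of `P ∈ (F_q[T])[X]` at `ξ ∈ F_q((T⁻¹))`. -/
def evalK (P : Polynomial (Polynomial Fq)) (ξ : K Fq) : K Fq :=
  Polynomial.eval₂ (polyToK Fq) ξ P

/-- Evaluation of `P ∈ (F_q[T])[X]` at a point of the algebraic closure. -/
def evalL (P : Polynomial (Polynomial Fq)) (α : L Fq) : L Fq :=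
  Polynomial.eval₂ (φ Fq) α P

/-- Height of a polynomial over `F_q[T]`: the maximum of the absolute values of its
coefficients. -/
def Hpoly (P : Polynomial (Polynomial Fq)) : ℝ := ⨆ i : ℕ, kabs Fq (polyToK Fq (P.coeff i))

/-- `P` is the minimal polynomial of `α`: a non-constant irreducible primitive polynomial in
`(F_q[T])[X]` whose leading coefficient is monic in `T`, vanishing at `α`. -/
def IsMinPolyOf (P : Polynomial (Polynomial Fq)) (α : L Fq) : Prop :=
  0 < P.natDegree ∧ Irreducible P ∧ P.IsPrimitive ∧ (P.leadingCoeff).Monic ∧ evalL Fq P α = 0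

/-- `α` is algebraic over `F_q(T)`. -/
def IsAlgElem (α : L Fq) : Prop := ∃ P, IsMinPolyOf Fq P α

open Classical in
/-- The minimal polynomial of an algebraic element (junk value `0` otherwise). -/
def minPolyPrim (α : L Fq) : Polynomial (Polynomial Fq) :=
  if h : IsAlgElem Fq α then h.choose else 0

/-- Degree of an algebraic element. -/
def degAlg (α : L Fq) : ℕ := (minPolyPrim Fq α).natDegree

/-- Height of an algebraic element. -/
def heightAlg (α : L Fq) : ℝ := Hpoly Fq (minPolyPrim Fq α)

/-- Inseparable degree of a polynomial `P ∈ (F_q[T])[X]`: the largest power `f = p^j` of the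
characteristic such that `P(X) = R(X^f)` for some `R`. -/
def insepDeg (P : Polynomial (Polynomial Fq)) : ℕ :=
  (ringChar Fq) ^ sSup {j : ℕ | ∃ R : Polynomial (Polynomial Fq),
    P = R.comp (Polynomial.X ^ (ringChar Fq) ^ j)}

/-- Inseparable degree of an algebraic element. -/
def insepAlg (α : L Fq) : ℕ := insepDeg Fq (minPolyPrim Fq α)

/-- `α'` is the Galois conjugate of the quadratic element `α` (equal to `α` itself in the
inseparable case): the minimal polynomial of `α` factors as `A(X - α)(X - α')`. -/
def IsConjOf (α' α : L Fq) : Prop :=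
  (minPolyPrim Fq α).natDegree = 2 ∧
  (minPolyPrim Fq α).map (φ Fq) =
    Polynomial.C (φ Fq (minPolyPrim Fq α).leadingCoeff) *
      (Polynomial.X - Polynomial.C α) * (Polynomial.X - Polynomial.C α')

/-- `v` is an absolute value on the algebraic closure of `F_q((T⁻¹))` extending `kabs`
(such an extension exists and is unique). -/
structure IsAbsExt (v : L Fq → ℝ) : Prop where
  eq_zero_iff : ∀ x, v x = 0 ↔ x = 0
  map_mul : ∀ x y, v (x * y) = v x * v y
  add_le : ∀ x y, v (x + y) ≤ max (v x) (v y)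
  nonneg : ∀ x, 0 ≤ v x
  extends_kabs : ∀ f : K Fq, v (toL Fq f) = kabs Fq f

/-- The exponent `w_n(ξ)`: the supremum of the real numbers `w` such that
`0 < |P(ξ)| ≤ H(P)^{-w}` for infinitely many `P ∈ (F_q[T])[X]` of degree at most `n`. -/
def wExp (n : ℕ) (ξ : K Fq) : EReal :=
  sSup {x : EReal | ∃ w : ℝ, x = (w : EReal) ∧
    {P : Polynomial (Polynomial Fq) | P.natDegree ≤ n ∧ 0 < kabs Fq (evalK Fq P ξ) ∧
      kabs Fq (evalK Fq P ξ) ≤ Hpoly Fq P ^ (-w)}.Infinite}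

/-- The exponent `w_n^*(ξ)`: the supremum of the real numbers `w` such that
`0 < |ξ - α| ≤ H(α)^{-w-1}` for infinitely many algebraic `α` of degree at most `n`. -/
def wStarExp (v : L Fq → ℝ) (n : ℕ) (ξ : K Fq) : EReal :=
  sSup {x : EReal | ∃ w : ℝ, x = (w : EReal) ∧
    {α : L Fq | IsAlgElem Fq α ∧ degAlg Fq α ≤ n ∧ 0 < v (toL Fq ξ - α) ∧
      v (toL Fq ξ - α) ≤ heightAlg Fq α ^ (-w - 1)}.Infinite}

/-- `pSeq a n = p_{n-1}`, the numerators of the convergents of `[a 0; a 1, a 2, …]`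
(with `p_{-1} = 1`). -/
def pSeq (a : ℕ → Polynomial Fq) : ℕ → Polynomial Fq
  | 0 => 1
  | 1 => a 0
  | (n+2) => a (n+1) * pSeq a (n+1) + pSeq a n

/-- `qSeq a n = q_{n-1}`, the denominators of the convergents of `[a 0; a 1, a 2, …]`
(with `q_{-1} = 0`). -/
def qSeq (a : ℕ → Polynomial Fq) : ℕ → Polynomial Fq
  | 0 => 0
  | 1 => 1
  | (n+2) => a (n+1) * qSeq a (n+1) + qSeq a n

/-- `ξ` has continued fraction expansion `[a 0; a 1, a 2, …]`: each partial quotient `a n`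
(`n ≥ 1`) has degree at least one and `|ξ - p_n/q_n| = |q_n|⁻¹|q_{n+1}|⁻¹` for all `n ≥ 0`. -/
def IsCFOf (ξ : K Fq) (a : ℕ → Polynomial Fq) : Prop :=
  (∀ n, 1 ≤ n → 1 ≤ (a n).natDegree) ∧
  ∀ n : ℕ,
    kabs Fq (ξ - polyToK Fq (pSeq Fq a (n+1)) / polyToK Fq (qSeq Fq a (n+1))) =
      (kabs Fq (polyToK Fq (qSeq Fq a (n+1))) * kabs Fq (polyToK Fq (qSeq Fq a (n+2))))⁻¹

/-- The sequence of partial quotients of `[0; b 0, b 1, b 2, …]`. -/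
def cfA (b : ℕ → Polynomial Fq) : ℕ → Polynomial Fq := fun n => if n = 0 then 0 else b (n - 1)

/-- `qden b n` is the denominator `q_n` of the `n`-th convergent of `[0; b 0, b 1, …]`. -/
def qden (b : ℕ → Polynomial Fq) (n : ℕ) : Polynomial Fq := qSeq Fq (cfA Fq b) (n + 1)

/-- `V^w` for a finite word `V` and a real `w ≥ 0`: `⌊w⌋` copies of `V` followed by the prefix
of `V` of length `⌈(w - ⌊w⌋)|V|⌉`. -/
def wordPow {A : Type*} (V : List A) (w : ℝ) : List A :=
  (List.replicate ⌊w⌋₊ V).flatten ++ V.take ⌈(w - ⌊w⌋₊) * V.length⌉₊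

/-- The finite word `l` is a prefix of the infinite word `b`. -/
def IsPrefixOfSeq {A : Type*} (l : List A) (b : ℕ → A) : Prop :=
  ∀ (i : ℕ) (h : i < l.length), l.get ⟨i, h⟩ = b i

/-- Condition `(*)_ρ` for an infinite word. -/
def SatisfiesCond {A : Type*} (b : ℕ → A) (ρ : ℝ) : Prop :=
  ∃ (U V : ℕ → List A) (w : ℕ → ℝ),
    (∀ n, V n ≠ []) ∧ (∀ n, 0 ≤ w n) ∧
    (∀ n, IsPrefixOfSeq (U n ++ wordPow (V n) (w n)) b) ∧
    (∀ n, ρ * (((U n).length + (V n).length : ℕ) : ℝ) ≤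
      (((U n).length + (wordPow (V n) (w n)).length : ℕ) : ℝ)) ∧
    StrictMono fun n => (wordPow (V n) (w n)).length

/-- The Diophantine exponent of an infinite word: the supremum of the `ρ` such that the word
satisfies Condition `(*)_ρ`. -/
def dioExp {A : Type*} (b : ℕ → A) : EReal :=
  sSup {x : EReal | ∃ ρ : ℝ, x = (ρ : EReal) ∧ SatisfiesCond b ρ}

/-- The complexity function: the number of distinct blocks of `n` consecutive letters. -/
def complexity {A : Type*} (b : ℕ → A) (n : ℕ) : ℕ∞ :=
  {w : Fin n → A | ∃ i : ℕ, ∀ k : Fin n, w k = b (i + k)}.encard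

/-- The infinite word `b` is ultimately periodic. -/
def UltimatelyPeriodic {A : Type*} (b : ℕ → A) : Prop :=
  ∃ N T : ℕ, 0 < T ∧ ∀ n, N ≤ n → b (n + T) = b n

/-!
The continued fraction of `ξ` consists of long blocks of `b`'s separated by single `c`'s. Replacing
everything after the `i`-th `c` by `b`'s gives a quadratic number `αᵢ`, the root of the polynomial
`Fᵢ` obtained by substituting `(q_{n-1} X - p_{n-1}, q_n X - p_n)` in the form `u² + b u z - z²`.
This form is anisotropic because `deg b ≥ 1`, and it is invariant up to sign under the step
`(u, z) ↦ (z, b z + u)` of the continued fraction algorithm. Hence `Fᵢ` is irreducible,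
`|Fᵢ'(ξ)| = |b|`, and the value of `Fᵢ` at `ξ` can be read off at the end of the block:
`|Fᵢ(ξ)|` is `H(Fᵢ₊₁)⁻¹` up to a constant, where `log H(Fᵢ₊₁) ∼ w log H(Fᵢ)`. The `Fᵢ` and `αᵢ`
therefore realize the exponents `w` and `w - 1`.

For the upper bounds, let `P` be of degree at most two. If `H(Fᵢ) H(P)²` is smaller than
`|Fᵢ(ξ)|⁻¹`, then either `Fᵢ ∣ P`, or the resultant of `Fᵢ` and `P` is nonzero and Liouville's
inequality gives `|P(ξ)| ≫ (H(Fᵢ) H(P))⁻¹`. With `i` minimal, so that `H(P)²` is at least of the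
order of `H(Fᵢ) / H(Fᵢ₋₁)`, this lower bound is at least `H(P)^{-(w - 1)}` precisely because
`w² - 5 w + 2 > 0`, that is, because `w > (5 + √17) / 2`. Only the multiples of the `Fᵢ` are left,
and they are not better than the `Fᵢ` themselves.
-/

section Nonarchimedean

variable {E : Type*} [Field E] {abv : AbsoluteValue E ℝ}

theorem abv_sub_le_max (h : IsNonarchimedean abv) (x y : E) :
    abv (x - y) ≤ max (abv x) (abv y) := by
  simpa only [sub_eq_add_neg, abv.map_neg] using h x (-y)

theorem abv_sub_le (h : IsNonarchimedean abv) {x y : E} {r : ℝ} (hx : abv x ≤ r)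
    (hy : abv y ≤ r) : abv (x - y) ≤ r :=
  (abv_sub_le_max h x y).trans (max_le hx hy)

theorem abv_sub_lt (h : IsNonarchimedean abv) {x y : E} {r : ℝ} (hx : abv x < r)
    (hy : abv y < r) : abv (x - y) < r :=
  (abv_sub_le_max h x y).trans_lt (max_lt hx hy)

theorem abv_sub_eq_left_of_lt (h : IsNonarchimedean abv) {x y : E} (hxy : abv y < abv x) :
    abv (x - y) = abv x := by
  rw [sub_eq_add_neg]
  exact h.add_eq_left_of_lt (by rwa [abv.map_neg])

theorem abv_sum_le (h : IsNonarchimedean abv) {ι : Type*} {s : Finset ι} {f : ι → E} {r : ℝ}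
    (hr : 0 ≤ r) (hf : ∀ i ∈ s, abv (f i) ≤ r) : abv (∑ i ∈ s, f i) ≤ r := by
  rcases s.eq_empty_or_nonempty with rfl | hs
  · simpa using hr
  · exact (h.apply_sum_le_sup hs).trans (Finset.sup'_le hs _ hf)

theorem abv_pow_sub_pow_le (h : IsNonarchimedean abv) {x y : E} (hx : abv x ≤ 1)
    (hy : abv y ≤ 1) (n : ℕ) : abv (x ^ n - y ^ n) ≤ abv (x - y) := by
  induction n with
  | zero => simp
  | succ n ih =>
    have hsplit : x ^ (n + 1) - y ^ (n + 1) = x * (x ^ n - y ^ n) + (x - y) * y ^ n := by ring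
    rw [hsplit]
    refine (h _ _).trans (max_le ?_ ?_)
    · rw [abv.map_mul]
      exact (mul_le_of_le_one_left (abv.nonneg _) hx).trans ih
    · rw [abv.map_mul, abv.map_pow]
      exact mul_le_of_le_one_right (abv.nonneg _) (pow_le_one₀ (abv.nonneg _) hy)

end Nonarchimedean

section LogHeight

variable {R : Type*} [CommSemiring R]

/-- The logarithmic height of `P ∈ R[T][X]`: the largest degree in `T` of a coefficient of `P`. -/
def logHeight (P : R[X][X]) : ℕ := P.support.sup fun i => (P.coeff i).natDegree

theorem natDegree_coeff_le_logHeight (P : R[X][X]) (i : ℕ) :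
    (P.coeff i).natDegree ≤ logHeight P := by
  by_cases hi : i ∈ P.support
  · exact Finset.le_sup (f := fun i => (P.coeff i).natDegree) hi
  · simp [notMem_support_iff.1 hi]

theorem logHeight_le_iff {P : R[X][X]} {n : ℕ} :
    logHeight P ≤ n ↔ ∀ i, (P.coeff i).natDegree ≤ n :=
  ⟨fun h i => (natDegree_coeff_le_logHeight P i).trans h, fun h => Finset.sup_le fun i _ => h i⟩

theorem exists_natDegree_coeff_eq_logHeight {P : R[X][X]} (hP : P ≠ 0) :
    ∃ i, P.coeff i ≠ 0 ∧ (P.coeff i).natDegree = logHeight P := by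
  obtain ⟨i, hi, h⟩ := Finset.exists_mem_eq_sup P.support (nonempty_support_iff.2 hP)
    fun i => (P.coeff i).natDegree
  exact ⟨i, mem_support_iff.1 hi, h.symm⟩

theorem logHeight_derivative_le (P : R[X][X]) : logHeight (derivative P) ≤ logHeight P := by
  refine logHeight_le_iff.2 fun i => ?_
  rw [coeff_derivative, ← Nat.cast_succ]
  refine (natDegree_mul_le.trans ?_).trans (natDegree_coeff_le_logHeight P (i + 1))
  rw [natDegree_natCast, add_zero]

theorem logHeight_C_mul [NoZeroDivisors R] {t : R[X]} (ht : t ≠ 0) {P : R[X][X]} (hP : P ≠ 0) :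
    logHeight (C t * P) = t.natDegree + logHeight P := by
  refine le_antisymm (logHeight_le_iff.2 fun i => ?_) ?_
  · rw [coeff_C_mul]
    exact natDegree_mul_le.trans (Nat.add_le_add_left (natDegree_coeff_le_logHeight P i) _)
  · obtain ⟨i, hi, h⟩ := exists_natDegree_coeff_eq_logHeight hP
    have := natDegree_coeff_le_logHeight (C t * P) i
    rwa [coeff_C_mul, natDegree_mul ht hi, h] at this

end LogHeight

section DegreeAbs

variable {k E : Type*} [Field k] [Field E]

/-- The absolute value `abv` is nonarchimedean and restricts, along `ι`, to the absolute value
`|P| = q ^ deg P` of `k[X]`. -/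
structure IsDegreeAbs (abv : AbsoluteValue E ℝ) (ι : k[X] →+* E) (q : ℝ) : Prop where
  one_lt : 1 < q
  isNonarchimedean : IsNonarchimedean abv
  map_eq : ∀ P : k[X], P ≠ 0 → abv (ι P) = q ^ (P.natDegree : ℝ)

namespace IsDegreeAbs

variable {abv : AbsoluteValue E ℝ} {ι : k[X] →+* E} {q : ℝ}

theorem pos (h : IsDegreeAbs abv ι q) : 0 < q := one_pos.trans h.one_lt

theorem rpow_pos (h : IsDegreeAbs abv ι q) (t : ℝ) : 0 < q ^ t := Real.rpow_pos_of_pos h.pos t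

theorem rpow_le_rpow_iff (h : IsDegreeAbs abv ι q) {s t : ℝ} : q ^ s ≤ q ^ t ↔ s ≤ t :=
  Real.rpow_le_rpow_left_iff h.one_lt

theorem rpow_lt_rpow_iff (h : IsDegreeAbs abv ι q) {s t : ℝ} : q ^ s < q ^ t ↔ s < t :=
  Real.rpow_lt_rpow_left_iff h.one_lt

theorem abv_mul_le_rpow (h : IsDegreeAbs abv ι q) {y z : E} {s t u : ℝ} (hy : abv y ≤ q ^ s)
    (hz : abv z ≤ q ^ t) (hu : s + t ≤ u) : abv (y * z) ≤ q ^ u := by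
  rw [abv.map_mul]
  calc abv y * abv z ≤ q ^ s * q ^ t := mul_le_mul hy hz (abv.nonneg z) (h.rpow_pos s).le
    _ = q ^ (s + t) := (Real.rpow_add h.pos s t).symm
    _ ≤ q ^ u := h.rpow_le_rpow_iff.2 hu

theorem abv_mul_lt_rpow (h : IsDegreeAbs abv ι q) {y z : E} {s t u : ℝ} (hy : abv y ≤ q ^ s)
    (hz : abv z < q ^ t) (hu : s + t ≤ u) : abv (y * z) < q ^ u := by
  rw [abv.map_mul]
  calc abv y * abv z ≤ q ^ s * abv z := mul_le_mul_of_nonneg_right hy (abv.nonneg z)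
    _ < q ^ s * q ^ t := mul_lt_mul_of_pos_left hz (h.rpow_pos s)
    _ = q ^ (s + t) := (Real.rpow_add h.pos s t).symm
    _ ≤ q ^ u := h.rpow_le_rpow_iff.2 hu

theorem one_le_map (h : IsDegreeAbs abv ι q) {P : k[X]} (hP : P ≠ 0) : 1 ≤ abv (ι P) := by
  rw [h.map_eq P hP]
  exact Real.one_le_rpow h.one_lt.le (Nat.cast_nonneg _)

theorem injective (h : IsDegreeAbs abv ι q) : Function.Injective ι := by
  refine (injective_iff_map_eq_zero ι).2 fun P hP => by_contra fun hP0 => ?_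
  have := h.one_le_map hP0
  rw [hP, abv.map_zero] at this
  exact one_pos.not_ge this

theorem map_le (h : IsDegreeAbs abv ι q) {P : k[X]} {n : ℕ} (hP : P.natDegree ≤ n) :
    abv (ι P) ≤ q ^ (n : ℝ) := by
  rcases eq_or_ne P 0 with rfl | hP0
  · simpa using (h.rpow_pos n).le
  · rw [h.map_eq P hP0, h.rpow_le_rpow_iff]
    exact_mod_cast hP

theorem map_lt_map (h : IsDegreeAbs abv ι q) {P Q : k[X]} (hPQ : P.degree < Q.degree) :
    abv (ι P) < abv (ι Q) := by
  have hQ : Q ≠ 0 := ne_zero_of_degree_gt hPQ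
  rcases eq_or_ne P 0 with rfl | hP
  · simpa using one_pos.trans_le (h.one_le_map hQ)
  · rw [h.map_eq P hP, h.map_eq Q hQ, h.rpow_lt_rpow_iff]
    exact_mod_cast natDegree_lt_natDegree hP hPQ

theorem natDegree_le_of_map_le_map (h : IsDegreeAbs abv ι q) {P Q : k[X]}
    (hPQ : abv (ι P) ≤ abv (ι Q)) : P.natDegree ≤ Q.natDegree :=
  natDegree_le_natDegree (le_of_not_gt fun hQP => (h.map_lt_map hQP).not_ge hPQ)

theorem abv_coeff_le (h : IsDegreeAbs abv ι q) (P : k[X][X]) (i : ℕ) :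
    abv (ι (P.coeff i)) ≤ q ^ (logHeight P : ℝ) :=
  h.map_le (natDegree_coeff_le_logHeight P i)

theorem abv_eval₂_le (h : IsDegreeAbs abv ι q) (P : k[X][X]) {x : E} (hx : abv x ≤ 1) :
    abv (eval₂ ι x P) ≤ q ^ (logHeight P : ℝ) := by
  rw [eval₂_eq_sum_range]
  refine abv_sum_le h.isNonarchimedean (h.rpow_pos _).le fun i _ => ?_
  rw [abv.map_mul, abv.map_pow]
  exact (mul_le_of_le_one_right (abv.nonneg _) (pow_le_one₀ (abv.nonneg _) hx)).trans
    (h.abv_coeff_le P i)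

theorem abv_eval₂_derivative_le (h : IsDegreeAbs abv ι q) (P : k[X][X]) {x : E}
    (hx : abv x ≤ 1) : abv (eval₂ ι x (derivative P)) ≤ q ^ (logHeight P : ℝ) :=
  (h.abv_eval₂_le _ hx).trans (h.rpow_le_rpow_iff.2 (by exact_mod_cast logHeight_derivative_le P))

theorem abv_eval₂_sub_le (h : IsDegreeAbs abv ι q) (P : k[X][X]) {x y : E} (hx : abv x ≤ 1)
    (hxy : abv (x - y) ≤ 1) :
    abv (eval₂ ι x P - eval₂ ι y P) ≤ abv (x - y) * q ^ (logHeight P : ℝ) := by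
  have hy : abv y ≤ 1 := by
    simpa only [sub_sub_cancel] using abv_sub_le h.isNonarchimedean hx hxy
  rw [eval₂_eq_sum_range, eval₂_eq_sum_range, ← Finset.sum_sub_distrib]
  refine abv_sum_le h.isNonarchimedean (mul_nonneg (abv.nonneg _) (h.rpow_pos _).le)
    fun i _ => ?_
  rw [← mul_sub, abv.map_mul, mul_comm]
  exact mul_le_mul (abv_pow_sub_pow_le h.isNonarchimedean hx hy i) (h.abv_coeff_le P i)
    (abv.nonneg _) (abv.nonneg _)

end IsDegreeAbs

end DegreeAbs

section Quadratic

variable {R S : Type*} [CommRing R] [CommRing S] (ι : R →+* S)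

theorem eq_quadratic_of_natDegree_le_two {P : R[X]} (hP : P.natDegree ≤ 2) :
    P = C (P.coeff 2) * X ^ 2 + C (P.coeff 1) * X + C (P.coeff 0) := by
  conv_lhs => rw [P.as_sum_range' 3 (by lia)]
  simp only [Finset.sum_range_succ, Finset.sum_range_zero, ← C_mul_X_pow_eq_monomial]
  ring

theorem eval₂_eq_of_natDegree_le_two {P : R[X]} (hP : P.natDegree ≤ 2) (x : S) :
    eval₂ ι x P = ι (P.coeff 2) * x ^ 2 + ι (P.coeff 1) * x + ι (P.coeff 0) := by
  conv_lhs => rw [eq_quadratic_of_natDegree_le_two hP]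
  simp only [eval₂_add, eval₂_mul, eval₂_C, eval₂_X_pow, eval₂_X]

theorem eval₂_derivative_of_natDegree_le_two {P : R[X]} (hP : P.natDegree ≤ 2) (x : S) :
    eval₂ ι x (derivative P) = 2 * ι (P.coeff 2) * x + ι (P.coeff 1) := by
  conv_lhs => rw [eq_quadratic_of_natDegree_le_two hP]
  simp only [derivative_add, derivative_C_mul, derivative_X_pow, derivative_X, derivative_C,
    eval₂_add, eval₂_mul, eval₂_C, eval₂_pow, eval₂_X, eval₂_one, eval₂_zero, Nat.cast_ofNat,
    eval₂_ofNat, map_ofNat]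
  ring

theorem eval₂_eq_sub_mul_of_root {P : R[X]} (hP : P.natDegree ≤ 2) {α : S}
    (hα : eval₂ ι α P = 0) (x : S) :
    eval₂ ι x P = (x - α) * (eval₂ ι x (derivative P) - ι (P.coeff 2) * (x - α)) := by
  rw [eval₂_eq_of_natDegree_le_two ι hP] at hα
  rw [eval₂_eq_of_natDegree_le_two ι hP, eval₂_derivative_of_natDegree_le_two ι hP]
  linear_combination hα

theorem resultant_two_two (F P : R[X]) :
    resultant F P 2 2 = (F.coeff 2 * P.coeff 0 - P.coeff 2 * F.coeff 0) ^ 2 -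
      (F.coeff 2 * P.coeff 1 - P.coeff 2 * F.coeff 1) *
        (F.coeff 1 * P.coeff 0 - P.coeff 1 * F.coeff 0) := by
  have hsyl : sylvester F P 2 2 =
      !![P.coeff 0, 0, F.coeff 0, 0; P.coeff 1, P.coeff 0, F.coeff 1, F.coeff 0;
        P.coeff 2, P.coeff 1, F.coeff 2, F.coeff 1; 0, P.coeff 2, 0, F.coeff 2] := by
    ext i j
    fin_cases i <;> fin_cases j <;> rfl
  rw [resultant, hsyl, Matrix.det_succ_row_zero]
  simp [Fin.sum_univ_succ, Matrix.det_fin_three, Fin.succAbove]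
  ring

-- The resultant is invariant under the substitution `X ↦ X + x`, which replaces the coefficients
-- of a quadratic polynomial by its leading coefficient, `P'(x)` and `P(x)`.
theorem map_resultant_two_two {F P : R[X]} (hF : F.natDegree ≤ 2) (hP : P.natDegree ≤ 2)
    (x : S) :
    ι (resultant F P 2 2) =
      (ι (F.coeff 2) * eval₂ ι x P - ι (P.coeff 2) * eval₂ ι x F) ^ 2 -
        (ι (F.coeff 2) * eval₂ ι x (derivative P) - ι (P.coeff 2) * eval₂ ι x (derivative F)) *
          (eval₂ ι x (derivative F) * eval₂ ι x P -
            eval₂ ι x (derivative P) * eval₂ ι x F) := by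
  rw [resultant_two_two, eval₂_eq_of_natDegree_le_two ι hP, eval₂_eq_of_natDegree_le_two ι hF,
    eval₂_derivative_of_natDegree_le_two ι hP, eval₂_derivative_of_natDegree_le_two ι hF]
  simp only [map_sub, map_mul, map_pow]
  ring

theorem linear_eq_zero_of_dvd [IsDomain R] {F : R[X]} (hF : F.natDegree = 2) {s t : R}
    (h : F ∣ C s * X + C t) : s = 0 ∧ t = 0 := by
  have h0 : C s * X + C t = 0 := by_contra fun h0 =>
    (natDegree_le_of_dvd h h0).not_gt (hF ▸ natDegree_linear_le.trans_lt one_lt_two)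
  exact ⟨by simpa using congrArg (coeff · 1) h0, by simpa using congrArg (coeff · 0) h0⟩

theorem dvd_of_resultant_two_two_eq_zero [IsDomain R] {F P : R[X]} (hF : Prime F)
    (hF2 : F.natDegree = 2) (hP : P.natDegree ≤ 2) (hres : resultant F P 2 2 = 0) : F ∣ P := by
  have hlead : F.coeff 2 ≠ 0 := by
    rw [← hF2]
    exact leadingCoeff_ne_zero.2 hF.ne_zero
  have hFeq := eq_quadratic_of_natDegree_le_two hF2.le
  have hPeq := eq_quadratic_of_natDegree_le_two hP
  rw [resultant_two_two] at hres
  set r₁ := F.coeff 2 * P.coeff 1 - P.coeff 2 * F.coeff 1 with hr₁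
  set r₂ := F.coeff 2 * P.coeff 0 - P.coeff 2 * F.coeff 0 with hr₂
  have hrem : C (F.coeff 2) * P = C (P.coeff 2) * F + (C r₁ * X + C r₂) := by
    simp only [hr₁, hr₂, C_sub, C_mul]
    linear_combination C (F.coeff 2) * hPeq - C (P.coeff 2) * hFeq
  have hfactor : C (r₁ ^ 2) * F =
      (C r₁ * X + C r₂) * (C (F.coeff 2 * r₁) * X + C (F.coeff 1 * r₁ - F.coeff 2 * r₂)) := by
    have hconst : F.coeff 0 * r₁ ^ 2 = F.coeff 1 * r₁ * r₂ - F.coeff 2 * r₂ ^ 2 := by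
      linear_combination F.coeff 2 * hres
    have hC := congrArg C hconst
    simp only [C_sub, C_mul, C_pow] at hC ⊢
    linear_combination C r₁ ^ 2 * hFeq + hC
  have hr : r₁ = 0 ∧ r₂ = 0 := by
    rcases hF.dvd_or_dvd (hfactor ▸ dvd_mul_left F (C (r₁ ^ 2))) with h | h
    · exact linear_eq_zero_of_dvd hF2 h
    · obtain ⟨h₁, h₂⟩ := linear_eq_zero_of_dvd hF2 h
      have h₁' : r₁ = 0 := (mul_eq_zero.1 h₁).resolve_left hlead
      exact ⟨h₁', by simpa [h₁', hlead] using h₂⟩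
  have hdvd : F ∣ C (F.coeff 2) * P := ⟨C (P.coeff 2), by rw [hrem, hr.1, hr.2]; simp [mul_comm]⟩
  refine (hF.dvd_or_dvd hdvd).resolve_left fun h => hlead ?_
  exact (linear_eq_zero_of_dvd hF2 (s := 0) (by simpa using h)).2

end Quadratic

section QuadraticHeight

variable {k E : Type*} [Field k] [Field E] {abv : AbsoluteValue E ℝ} {ι : k[X] →+* E} {q : ℝ}
  {x : E}

theorem IsDegreeAbs.logHeight_eq_natDegree_coeff_two (h : IsDegreeAbs abv ι q) {P : k[X][X]}
    (hP : P.natDegree ≤ 2) (hx : abv x ≤ 1) (heval : abv (eval₂ ι x P) ≤ abv (ι (P.coeff 2)))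
    (hderiv : abv (eval₂ ι x (derivative P)) ≤ abv (ι (P.coeff 2))) :
    logHeight P = (P.coeff 2).natDegree := by
  rw [eval₂_eq_of_natDegree_le_two ι hP] at heval
  rw [eval₂_derivative_of_natDegree_le_two ι hP] at hderiv
  have mul_x_le {y : E} (hy : abv y ≤ abv (ι (P.coeff 2))) : abv (y * x) ≤ abv (ι (P.coeff 2)) := by
    rw [abv.map_mul]
    exact (mul_le_of_le_one_right (abv.nonneg y) hx).trans hy
  have hlead := mul_x_le le_rfl
  have hcoeff_one : abv (ι (P.coeff 1)) ≤ abv (ι (P.coeff 2)) := by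
    have := abv_sub_le h.isNonarchimedean hderiv
      ((h.isNonarchimedean _ _).trans (max_le hlead hlead))
    convert this using 2
    ring
  have hcoeff_zero : abv (ι (P.coeff 0)) ≤ abv (ι (P.coeff 2)) := by
    have := abv_sub_le h.isNonarchimedean heval
      ((h.isNonarchimedean _ _).trans (max_le (mul_x_le hlead) (mul_x_le hcoeff_one)))
    convert this using 2
    ring
  refine le_antisymm (logHeight_le_iff.2 fun i => ?_) (natDegree_coeff_le_logHeight P 2)
  match i with
  | 0 => exact h.natDegree_le_of_map_le_map hcoeff_zero
  | 1 => exact h.natDegree_le_of_map_le_map hcoeff_one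
  | 2 => exact le_rfl
  | i + 3 => simp [coeff_eq_zero_of_natDegree_lt (show P.natDegree < i + 3 by lia)]

end QuadraticHeight

section QuadApprox

variable {k E : Type*} [Field k] [Field E]

/-- `F` is an irreducible quadratic polynomial over `k[T]` which is very small at `x`, namely
`|F(x)| = q ^ (-ε)`, while its derivative there is of prescribed size `|F'(x)| = q ^ β`. -/
structure IsQuadApprox (abv : AbsoluteValue E ℝ) (ι : k[X] →+* E) (q : ℝ) (x : E) (F : k[X][X])
    (ε : ℝ) (β : ℕ) : Prop where
  irreducible : Irreducible F
  natDegree_eq : F.natDegree = 2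
  abv_derivative : abv (eval₂ ι x (derivative F)) = q ^ (β : ℝ)
  abv_eval : abv (eval₂ ι x F) = q ^ (-ε)

namespace IsQuadApprox

variable {abv : AbsoluteValue E ℝ} {ι : k[X] →+* E} {q : ℝ} {x : E} {F : k[X][X]} {ε : ℝ} {β : ℕ}

theorem le_logHeight (hF : IsQuadApprox abv ι q x F ε β) (h : IsDegreeAbs abv ι q)
    (hx : abv x ≤ 1) : β ≤ logHeight F := by
  have := h.abv_eval₂_derivative_le F hx
  rw [hF.abv_derivative, h.rpow_le_rpow_iff] at this
  exact_mod_cast this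

theorem coeff_two_ne_zero (hF : IsQuadApprox abv ι q x F ε β) : F.coeff 2 ≠ 0 := by
  rw [← hF.natDegree_eq]
  exact leadingCoeff_ne_zero.2 hF.irreducible.ne_zero

theorem abv_resultant_lt_one (hF : IsQuadApprox abv ι q x F ε β) (h : IsDegreeAbs abv ι q)
    (hx : abv x ≤ 1) {P : k[X][X]} (hP : P.natDegree ≤ 2)
    (hε : (logHeight F : ℝ) + 2 * logHeight P < ε)
    (hsmall : abv (eval₂ ι x P) < q ^ (-(logHeight F + logHeight P + β : ℝ))) :
    abv (ι (resultant F P 2 2)) < 1 := by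
  have hβ : (β : ℝ) ≤ logHeight F := by exact_mod_cast hF.le_logHeight h hx
  have : (0 : ℝ) ≤ β := β.cast_nonneg
  have : (0 : ℝ) ≤ logHeight P := (logHeight P).cast_nonneg
  have hFx {s : ℝ} (hs : -ε < s) : abv (eval₂ ι x F) < q ^ s := by
    rwa [hF.abv_eval, h.rpow_lt_rpow_iff]
  have hfirst : abv (ι (F.coeff 2) * eval₂ ι x P - ι (P.coeff 2) * eval₂ ι x F) < q ^ (0 : ℝ) :=
    abv_sub_lt h.isNonarchimedean
      (h.abv_mul_lt_rpow (h.abv_coeff_le F 2) hsmall (by linarith))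
      (h.abv_mul_lt_rpow (t := -(logHeight P : ℝ)) (h.abv_coeff_le P 2)
        (hFx (by linarith)) (by linarith))
  have hsecond : abv (ι (F.coeff 2) * eval₂ ι x (derivative P) -
      ι (P.coeff 2) * eval₂ ι x (derivative F)) ≤ q ^ (logHeight F + logHeight P : ℝ) :=
    abv_sub_le h.isNonarchimedean
      (h.abv_mul_le_rpow (h.abv_coeff_le F 2) (h.abv_eval₂_derivative_le P hx) le_rfl)
      (h.abv_mul_le_rpow (h.abv_coeff_le P 2) hF.abv_derivative.le (by linarith))
  have hthird : abv (eval₂ ι x (derivative F) * eval₂ ι x P -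
      eval₂ ι x (derivative P) * eval₂ ι x F) < q ^ (-(logHeight F + logHeight P : ℝ)) :=
    abv_sub_lt h.isNonarchimedean
      (h.abv_mul_lt_rpow hF.abv_derivative.le hsmall (by linarith))
      (h.abv_mul_lt_rpow (t := -(logHeight F + 2 * logHeight P : ℝ))
        (h.abv_eval₂_derivative_le P hx) (hFx (by linarith)) (by linarith))
  rw [map_resultant_two_two ι hF.natDegree_eq.le hP x, ← Real.rpow_zero q, pow_two]
  exact abv_sub_lt h.isNonarchimedean (h.abv_mul_lt_rpow hfirst.le hfirst (by simp))
    (h.abv_mul_lt_rpow hsecond hthird (by simp))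

-- Liouville's inequality: a nonzero resultant is a nonzero polynomial, so has absolute value `≥ 1`.
theorem dvd_or_le_abv_eval (hF : IsQuadApprox abv ι q x F ε β) (h : IsDegreeAbs abv ι q)
    (hx : abv x ≤ 1) {P : k[X][X]} (hP : P.natDegree ≤ 2)
    (hε : (logHeight F : ℝ) + 2 * logHeight P < ε) :
    F ∣ P ∨ q ^ (-(logHeight F + logHeight P + β : ℝ)) ≤ abv (eval₂ ι x P) := by
  refine or_iff_not_imp_right.2 fun hsmall =>
    dvd_of_resultant_two_two_eq_zero hF.irreducible.prime hF.natDegree_eq hP ?_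
  by_contra hres
  exact (h.one_le_map hres).not_gt
    (hF.abv_resultant_lt_one h hx hP hε (not_le.1 hsmall))

theorem exists_eq_C_mul (hF : IsQuadApprox abv ι q x F ε β) {P : k[X][X]} (hP0 : P ≠ 0)
    (hP : P.natDegree ≤ 2) (hFP : F ∣ P) : ∃ t : k[X], t ≠ 0 ∧ P = C t * F := by
  obtain ⟨g, rfl⟩ := hFP
  have hg : g ≠ 0 := right_ne_zero_of_mul hP0
  rw [natDegree_mul hF.irreducible.ne_zero hg, hF.natDegree_eq] at hP
  obtain ⟨t, rfl⟩ := natDegree_eq_zero.1 (show g.natDegree = 0 by lia)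
  exact ⟨t, C_ne_zero.1 hg, mul_comm _ _⟩

theorem le_abv_sub_root (hF : IsQuadApprox abv ι q x F ε β) (h : IsDegreeAbs abv ι q) {α : E}
    (hα : eval₂ ι α F = 0) (hclose : abv (x - α) ≤ q ^ (-(logHeight F : ℝ))) :
    q ^ (-ε - β) ≤ abv (x - α) := by
  have hlead : abv (ι (F.coeff 2) * (x - α)) ≤ q ^ (β : ℝ) := by
    rw [abv.map_mul]
    calc abv (ι (F.coeff 2)) * abv (x - α)
        ≤ q ^ (logHeight F : ℝ) * q ^ (-(logHeight F : ℝ)) :=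
          mul_le_mul (h.abv_coeff_le F 2) hclose (abv.nonneg _) (h.rpow_pos _).le
      _ = q ^ (0 : ℝ) := by rw [← Real.rpow_add h.pos, add_neg_cancel]
      _ ≤ q ^ (β : ℝ) := h.rpow_le_rpow_iff.2 β.cast_nonneg
  have hcofactor := abv_sub_le h.isNonarchimedean hF.abv_derivative.le hlead
  rw [Real.rpow_sub h.pos, div_le_iff₀ (h.rpow_pos _), ← hF.abv_eval,
    eval₂_eq_sub_mul_of_root ι hF.natDegree_eq.le hα x, abv.map_mul]
  exact mul_le_mul_of_nonneg_left hcofactor (abv.nonneg _)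

-- Let `x - δ` and `x - η` be the roots of `F`. Then `F(x) = A δ η` and `F'(x) = A (δ + η)`, so the
-- smaller of `|δ|` and `|η|` is at most `|F(x)| / |F'(x)|`.
theorem exists_root_abv_sub_le [IsAlgClosed E] (hF : IsQuadApprox abv ι q x F ε β)
    (h : IsDegreeAbs abv ι q) :
    ∃ α, eval₂ ι α F = 0 ∧ abv (x - α) ≤ q ^ (-ε - β) := by
  have hA : ι (F.coeff 2) ≠ 0 := (map_ne_zero_iff ι h.injective).2 hF.coeff_two_ne_zero
  have smaller_root {δ δ' : E} (hmul : ι (F.coeff 2) * δ * δ' = eval₂ ι x F)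
      (hadd : ι (F.coeff 2) * (δ + δ') = eval₂ ι x (derivative F)) (hle : abv δ ≤ abv δ') :
      eval₂ ι (x - δ) F = 0 ∧ abv (x - (x - δ)) ≤ q ^ (-ε - β) := by
    constructor
    · rw [eval₂_eq_of_natDegree_le_two ι hF.natDegree_eq.le] at hmul ⊢
      rw [eval₂_derivative_of_natDegree_le_two ι hF.natDegree_eq.le] at hadd
      linear_combination -hmul + δ * hadd
    · rw [sub_sub_cancel, Real.rpow_sub h.pos, le_div_iff₀ (h.rpow_pos _), ← hF.abv_eval,
        ← hF.abv_derivative, ← hadd, ← hmul, mul_assoc, mul_left_comm]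
      simp only [abv.map_mul]
      refine mul_le_mul_of_nonneg_left ?_ (abv.nonneg _)
      refine mul_le_mul_of_nonneg_left ?_ (abv.nonneg _)
      exact (h.isNonarchimedean δ δ').trans (max_le hle le_rfl)
  obtain ⟨α, hα⟩ := IsAlgClosed.exists_eval₂_eq_zero_of_injective ι h.injective F
    (degree_ne_of_natDegree_ne (by rw [hF.natDegree_eq]; exact two_ne_zero))
  have hadd : ι (F.coeff 2) *
      ((x - α) + (eval₂ ι x (derivative F) / ι (F.coeff 2) - (x - α))) =
      eval₂ ι x (derivative F) := by rw [add_sub_cancel, mul_div_cancel₀ _ hA]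
  have hmul : ι (F.coeff 2) * (x - α) *
      (eval₂ ι x (derivative F) / ι (F.coeff 2) - (x - α)) = eval₂ ι x F := by
    rw [eval₂_eq_sub_mul_of_root ι hF.natDegree_eq.le hα x]
    linear_combination (x - α) * hadd
  rcases le_total (abv (x - α)) (abv (eval₂ ι x (derivative F) / ι (F.coeff 2) - (x - α)))
    with hle | hle
  · exact ⟨_, smaller_root hmul hadd hle⟩
  · exact ⟨_, smaller_root ((mul_right_comm _ _ _).trans hmul)
      ((congrArg _ (add_comm _ _)).trans hadd) hle⟩

end IsQuadApprox

end QuadApprox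

section Growth

open scoped Topology

/-- `H` tends to infinity like a geometric progression of ratio `w`. -/
structure HasGrowthRatio (H : ℕ → ℝ) (w : ℝ) : Prop where
  tendsto_atTop : Tendsto H atTop atTop
  tendsto_ratio : Tendsto (fun i => H (i + 1) / H i) atTop (𝓝 w)

namespace HasGrowthRatio

variable {H N : ℕ → ℝ} {w : ℝ}

theorem comp_add (h : HasGrowthRatio H w) (m : ℕ) : HasGrowthRatio (fun i => H (i + m)) w where
  tendsto_atTop := (tendsto_add_atTop_iff_nat m).2 h.tendsto_atTop
  tendsto_ratio := by
    simpa only [add_right_comm _ m 1] using (tendsto_add_atTop_iff_nat m).2 h.tendsto_ratio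

theorem tendsto_linear (h : HasGrowthRatio H w) {s t : ℝ} (hst : 0 < s * w + t) :
    Tendsto (fun i => s * H (i + 1) + t * H i) atTop atTop := by
  have hcoeff : Tendsto (fun i => s * (H (i + 1) / H i) + t) atTop (𝓝 (s * w + t)) :=
    (h.tendsto_ratio.const_mul s).add_const t
  refine (h.tendsto_atTop.atTop_mul_pos hst hcoeff).congr' ?_
  filter_upwards [h.tendsto_atTop.eventually_gt_atTop 0] with i hi
  field_simp

theorem eventually_lt_linear (h : HasGrowthRatio H w) {s t : ℝ} (hst : 0 < s * w + t) (c : ℝ) :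
    ∀ᶠ i in atTop, c < s * H (i + 1) + t * H i :=
  (h.tendsto_linear hst).eventually_gt_atTop c

theorem of_tendsto_div (hN : HasGrowthRatio N w) {g : ℝ} (hg : 0 < g)
    (hH : Tendsto (fun i => H i / N i) atTop (𝓝 g)) : HasGrowthRatio H w where
  tendsto_atTop := by
    refine (hN.tendsto_atTop.atTop_mul_pos hg hH).congr' ?_
    filter_upwards [hN.tendsto_atTop.eventually_ne_atTop 0] with i hi
    exact mul_div_cancel₀ _ hi
  tendsto_ratio := by
    have hsucc : Tendsto (fun i => H (i + 1) / N (i + 1)) atTop (𝓝 g) :=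
      hH.comp (tendsto_add_atTop_nat 1)
    have := (hsucc.div hH hg.ne').mul hN.tendsto_ratio
    rw [div_self hg.ne', one_mul] at this
    refine this.congr' ?_
    filter_upwards [hN.tendsto_atTop.eventually_ne_atTop 0,
      (hN.tendsto_atTop.comp (tendsto_add_atTop_nat 1)).eventually_ne_atTop 0] with i hi hi'
    simp only [Function.comp_apply] at hi'
    rw [Pi.div_apply]
    field_simp

theorem tendsto_natCast_div (hN : HasGrowthRatio N w) (hw : 1 < w) :
    Tendsto (fun i : ℕ => (i : ℝ) / N i) atTop (𝓝 0) := by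
  have hratio : Tendsto (fun i : ℕ => ‖((i + 1 : ℕ) : ℝ) / N (i + 1)‖ / ‖(i : ℝ) / N i‖) atTop
      (𝓝 (1⁻¹ * w⁻¹)) := by
    refine (((tendsto_natCast_div_add_atTop (1 : ℝ)).inv₀ one_ne_zero).mul
      (hN.tendsto_ratio.inv₀ (by positivity))).congr' ?_
    filter_upwards [hN.tendsto_atTop.eventually_gt_atTop 0,
      (tendsto_add_atTop_iff_nat 1).2 hN.tendsto_atTop |>.eventually_gt_atTop 0] with i hi hi'
    rw [Real.norm_of_nonneg (by positivity), Real.norm_of_nonneg (by positivity), Nat.cast_succ]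
    field_simp
  refine (summable_of_ratio_test_tendsto_lt_one (by simpa using inv_lt_one_of_one_lt₀ hw) ?_
    hratio).tendsto_atTop_zero
  filter_upwards [hN.tendsto_atTop.eventually_gt_atTop 0, eventually_gt_atTop 0] with i hi hi0
  positivity

theorem add_mul_natCast_add_mul (hN : HasGrowthRatio N w) (hw : 1 < w) (s t : ℝ) {g : ℝ}
    (hg : 0 < g) : HasGrowthRatio (fun i => s + t * i + g * N i) w := by
  refine hN.of_tendsto_div hg ?_
  have hlim := ((hN.tendsto_atTop.const_div_atTop s).add
    ((hN.tendsto_natCast_div hw).const_mul t)).add_const g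
  rw [mul_zero, zero_add, zero_add] at hlim
  refine hlim.congr' ?_
  filter_upwards [hN.tendsto_atTop.eventually_ne_atTop 0] with i hi
  field_simp

end HasGrowthRatio

theorem exists_le_lt_succ_of_tendsto_atTop {u : ℕ → ℝ} (hu : Tendsto u atTop atTop) {m : ℕ}
    {t : ℝ} (ht : u m ≤ t) : ∃ i ≥ m, u i ≤ t ∧ t < u (i + 1) := by
  by_contra! hstep
  have hle : ∀ i ≥ m, u i ≤ t := fun i hi => Nat.le_induction ht hstep i hi
  obtain ⟨i, hi, hlt⟩ := ((eventually_ge_atTop m).and (hu.eventually_gt_atTop t)).exists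
  exact (hle i hi).not_gt hlt

theorem four_lt_of_five_add_sqrt_lt {w : ℝ} (hw : (5 + √17) / 2 < w) : 4 < w := by
  have : (3 : ℝ) < √17 := Real.lt_sqrt_of_sq_lt (by norm_num)
  linarith

theorem quadratic_pos_of_five_add_sqrt_lt {w : ℝ} (hw : (5 + √17) / 2 < w) :
    0 < (w - 4) * w - (w - 2) := by
  have hsq : √17 ^ 2 = 17 := Real.sq_sqrt (by norm_num)
  have hsqrt : √17 < 2 * w - 5 := by linarith
  have := pow_lt_pow_left₀ hsqrt (Real.sqrt_nonneg 17) two_ne_zero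
  linarith

end Growth

section QuadApproxSeq

variable {k E : Type*} [Field k] [Field E]

/-- A sequence of irreducible quadratic polynomials, with heights of growth ratio `w`, such that
the smallness of each of them at `x` is governed by the height of its successor. -/
structure IsQuadApproxSeq (abv : AbsoluteValue E ℝ) (ι : k[X] →+* E) (q : ℝ) (x : E)
    (F : ℕ → k[X][X]) (w : ℝ) (β γ : ℕ) : Prop where
  abv_le_one : abv x ≤ 1
  approx : ∀ i, IsQuadApprox abv ι q x (F i) (logHeight (F (i + 1)) - γ) β
  growth : HasGrowthRatio (fun i => (logHeight (F i) : ℝ)) w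

namespace IsQuadApproxSeq

variable {abv : AbsoluteValue E ℝ} {ι : k[X] →+* E} {q : ℝ} {x : E} {F : ℕ → k[X][X]} {w : ℝ}
  {β γ : ℕ}

-- Choose `i` with `H (i + 1) - H i - γ ≤ 2 h < H (i + 2) - H (i + 1) - γ`, where `h` is the height
-- of `P`, and compare `P` with `F (i + 1)`.
theorem dvd_or_le_abv_eval (hF : IsQuadApproxSeq abv ι q x F w β γ) (h : IsDegreeAbs abv ι q)
    (hw : (5 + √17) / 2 < w) (m : ℕ) :
    ∃ M : ℕ, ∀ P : k[X][X], P.natDegree ≤ 2 → M ≤ logHeight P →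
      (∃ i ≥ m, F i ∣ P) ∨ q ^ (-((w - 1) * logHeight P)) ≤ abv (eval₂ ι x P) := by
  have hw4 := four_lt_of_five_add_sqrt_lt hw
  obtain ⟨n, hn⟩ := eventually_atTop.1 (hF.growth.eventually_lt_linear (s := w - 4)
    (t := -(w - 2)) (by linarith [quadratic_pos_of_five_add_sqrt_lt hw]) (2 * β + (w - 2) * γ))
  let gap (i : ℕ) : ℝ := 1 * logHeight (F (i + 1)) + -1 * logHeight (F i)
  have hgap : Tendsto gap atTop atTop := hF.growth.tendsto_linear (by linarith)
  refine ⟨⌈gap (max m n)⌉₊, fun P hP hM => ?_⟩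
  have hstart : gap (max m n) ≤ 2 * logHeight P + γ := by
    have : gap (max m n) ≤ logHeight P := (Nat.le_ceil _).trans (by exact_mod_cast hM)
    exact this.trans (by linarith [(logHeight P).cast_nonneg (α := ℝ), γ.cast_nonneg (α := ℝ)])
  obtain ⟨i, hi, hlower, hupper⟩ := exists_le_lt_succ_of_tendsto_atTop hgap hstart
  simp only [gap] at hlower hupper
  refine ((hF.approx (i + 1)).dvd_or_le_abv_eval h hF.abv_le_one hP (by linarith)).imp
    (fun hdvd => ⟨i + 1, by lia, hdvd⟩) fun hle => (h.rpow_le_rpow_iff.2 ?_).trans hle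
  have hlarge := hn i (by lia)
  have := mul_le_mul_of_nonneg_left hlower (show 0 ≤ w - 2 by linarith)
  linarith

theorem exists_lt_abv_eval (hF : IsQuadApproxSeq abv ι q x F w β γ) (h : IsDegreeAbs abv ι q)
    (hw : (5 + √17) / 2 < w) {s : ℝ} (hs : w < s) :
    ∃ M : ℕ, ∀ P : k[X][X], P ≠ 0 → P.natDegree ≤ 2 → M ≤ logHeight P →
      q ^ (-(s * logHeight P)) < abv (eval₂ ι x P) := by
  have hw4 := four_lt_of_five_add_sqrt_lt hw
  obtain ⟨n, hn⟩ := eventually_atTop.1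
    (hF.growth.eventually_lt_linear (s := -1) (t := s) (by linarith) (-γ))
  obtain ⟨M, hM⟩ := hF.dvd_or_le_abv_eval h hw n
  refine ⟨M + 1, fun P hP0 hP hPM => ?_⟩
  rcases hM P hP (by lia) with ⟨i, hi, hdvd⟩ | hle
  · obtain ⟨t, ht, rfl⟩ := (hF.approx i).exists_eq_C_mul hP0 hP hdvd
    rw [eval₂_mul, eval₂_C, abv.map_mul, h.map_eq t ht, (hF.approx i).abv_eval,
      ← Real.rpow_add h.pos, h.rpow_lt_rpow_iff,
      logHeight_C_mul ht (hF.approx i).irreducible.ne_zero]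
    push_cast
    have := mul_nonneg (show 0 ≤ s + 1 by linarith) (t.natDegree.cast_nonneg (α := ℝ))
    linarith [hn i hi]
  · have hpos : (0 : ℝ) < logHeight P := by exact_mod_cast (by lia : 0 < logHeight P)
    refine (h.rpow_lt_rpow_iff.2 ?_).trans_le hle
    linarith [mul_pos (show 0 < s - (w - 1) by linarith) hpos]

theorem exists_lt_abv_sub_root (hF : IsQuadApproxSeq abv ι q x F w β γ) (h : IsDegreeAbs abv ι q)
    (hw : (5 + √17) / 2 < w) {s : ℝ} (hs : w - 1 < s) :
    ∃ M : ℕ, ∀ P : k[X][X], P ≠ 0 → P.natDegree ≤ 2 → M ≤ logHeight P →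
      ∀ α, eval₂ ι α P = 0 → q ^ (-((s + 1) * logHeight P)) < abv (x - α) := by
  have hw4 := four_lt_of_five_add_sqrt_lt hw
  obtain ⟨n, hn⟩ := eventually_atTop.1
    (hF.growth.eventually_lt_linear (s := -1) (t := s + 1) (by linarith) (β - γ))
  obtain ⟨M, hM⟩ := hF.dvd_or_le_abv_eval h hw n
  refine ⟨M + 1, fun P hP0 hP hPM α hα => lt_of_not_ge fun hclose => ?_⟩
  have hpos : (0 : ℝ) < logHeight P := by exact_mod_cast (by lia : 0 < logHeight P)
  rcases hM P hP (by lia) with ⟨i, hi, hdvd⟩ | hle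
  · obtain ⟨t, ht, rfl⟩ := (hF.approx i).exists_eq_C_mul hP0 hP hdvd
    have hFα : eval₂ ι α (F i) = 0 := by
      rw [eval₂_mul, eval₂_C] at hα
      exact (mul_eq_zero.1 hα).resolve_left ((map_ne_zero_iff ι h.injective).2 ht)
    have hheight : (s + 1) * logHeight (F i) ≤ (s + 1) * logHeight (C t * F i) := by
      rw [logHeight_C_mul ht (hF.approx i).irreducible.ne_zero]
      gcongr
      · linarith
      · lia
    have hHi := mul_nonneg (show 0 ≤ s by linarith) ((logHeight (F i)).cast_nonneg (α := ℝ))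
    have hroot := ((hF.approx i).le_abv_sub_root h hFα
      (hclose.trans (h.rpow_le_rpow_iff.2 (by linarith)))).trans hclose
    rw [h.rpow_le_rpow_iff] at hroot
    linarith [hn i hi]
  · have hsub := h.abv_eval₂_sub_le P hF.abv_le_one (hclose.trans
      (Real.rpow_le_one_of_one_le_of_nonpos h.one_lt.le (by nlinarith)))
    rw [hα, sub_zero] at hsub
    have := hle.trans (hsub.trans (mul_le_mul_of_nonneg_right hclose (h.rpow_pos _).le))
    rw [← Real.rpow_add h.pos, h.rpow_le_rpow_iff] at this
    linarith [mul_pos (show 0 < s - (w - 1) by linarith) hpos]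

theorem exists_abv_eval_le (hF : IsQuadApproxSeq abv ι q x F w β γ) (h : IsDegreeAbs abv ι q)
    {s : ℝ} (hs : s < w) (M : ℕ) :
    ∃ i, M ≤ logHeight (F i) ∧ 0 < abv (eval₂ ι x (F i)) ∧
      abv (eval₂ ι x (F i)) ≤ q ^ (-(s * logHeight (F i))) := by
  obtain ⟨i, hi, hM⟩ := ((hF.growth.eventually_lt_linear (s := 1) (t := -s) (by linarith) γ).and
    (hF.growth.tendsto_atTop.eventually_ge_atTop M)).exists
  refine ⟨i, by exact_mod_cast hM, ?_⟩
  rw [(hF.approx i).abv_eval]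
  exact ⟨h.rpow_pos _, h.rpow_le_rpow_iff.2 (by linarith)⟩

theorem exists_abv_sub_root_le [IsAlgClosed E] (hF : IsQuadApproxSeq abv ι q x F w β γ)
    (h : IsDegreeAbs abv ι q) {s : ℝ} (hs : s < w - 1) (M : ℕ) :
    ∃ i α, M ≤ logHeight (F i) ∧ eval₂ ι α (F i) = 0 ∧ 0 < abv (x - α) ∧
      abv (x - α) ≤ q ^ (-((s + 1) * logHeight (F i))) := by
  obtain ⟨i, hi, hM⟩ := ((hF.growth.eventually_lt_linear (s := 1) (t := -(s + 1)) (by linarith)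
    γ).and (hF.growth.tendsto_atTop.eventually_ge_atTop M)).exists
  obtain ⟨α, hα, hclose⟩ := (hF.approx i).exists_root_abv_sub_le h
  refine ⟨i, α, by exact_mod_cast hM, hα, abv.pos (sub_ne_zero.2 ?_),
    hclose.trans (h.rpow_le_rpow_iff.2 (by linarith [β.cast_nonneg (α := ℝ)]))⟩
  rintro rfl
  have := (hF.approx i).abv_eval
  rw [hα, abv.map_zero] at this
  exact (h.rpow_pos _).ne this

end IsQuadApproxSeq

end QuadApproxSeq

section NormForm

/-- The norm form `u² + b u z - z²` of the quadratic order generated by a root `θ` of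
`θ² = b θ + 1`: it is the norm of `u + z θ`. The root `θ` is the value of the constant continued
fraction `[b; b, b, …]`. -/
def normForm {R : Type*} [CommRing R] (b u z : R) : R := u ^ 2 + b * u * z - z ^ 2

theorem map_normForm {R S : Type*} [CommRing R] [CommRing S] (f : R →+* S) (b u z : R) :
    f (normForm b u z) = normForm (f b) (f u) (f z) := by
  simp only [normForm, map_sub, map_add, map_mul, map_pow]

theorem normForm_mul_add {R : Type*} [CommRing R] (b u z : R) :
    normForm b z (b * z + u) = -normForm b u z := by
  unfold normForm
  ring

theorem eq_zero_of_normForm_eq_zero {k K : Type*} [Field k] [Field K] [Algebra k[X] K]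
    [IsFractionRing k[X] K] {b : k[X]} (hb : b.natDegree ≠ 0) {u z : K}
    (h : normForm (algebraMap k[X] K b) u z = 0) : u = 0 ∧ z = 0 := by
  unfold normForm at h
  rcases eq_or_ne z 0 with rfl | hz
  · exact ⟨by simpa using h, rfl⟩
  refine absurd ?_ hb
  obtain ⟨s, hs⟩ : ∃ s, algebraMap k[X] K s = u / z := by
    refine IsIntegrallyClosed.isIntegral_iff.1 ⟨X ^ 2 + C b * X + C (-1), ?_, ?_⟩
    · rw [add_assoc]
      exact monic_X_pow_add (by compute_degree!)
    · simp only [eval₂_add, eval₂_mul, eval₂_pow, eval₂_X, eval₂_C, map_neg, map_one, eval₂_neg,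
        eval₂_one]
      field_simp
      linear_combination h
  have hunit : s * (s + b) = 1 := by
    refine IsFractionRing.injective k[X] K ?_
    rw [map_mul, map_add, hs, map_one]
    field_simp
    linear_combination h
  have hs0 := natDegree_eq_zero_of_isUnit (IsUnit.of_mul_eq_one _ hunit)
  have hsb0 := natDegree_eq_zero_of_isUnit (IsUnit.of_mul_eq_one_right _ hunit)
  rw [← add_sub_cancel_left s b]
  exact Nat.le_zero.1 ((natDegree_sub_le _ _).trans (by simp [hs0, hsb0]))

section Nonarchimedean

variable {E : Type*} [Field E] {abv : AbsoluteValue E ℝ}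

theorem abv_sq_sub_mul_add_mul (h : IsNonarchimedean abv) {y u z d : E} (hd : 1 ≤ abv d)
    (hyu : abv y < abv u) (huz : abv u < abv z) :
    abv (u ^ 2 - y * z + d * (u * z)) = abv d * (abv u * abv z) := by
  have hu : 0 < abv u := (abv.nonneg y).trans_lt hyu
  have hsmall : abv (u ^ 2 - y * z) < abv (u * z) := by
    refine abv_sub_lt h ?_ ?_
    · rw [sq, abv.map_mul, abv.map_mul]
      exact mul_lt_mul_of_pos_left huz hu
    · rw [abv.map_mul, abv.map_mul]
      exact mul_lt_mul_of_pos_right hyu (hu.trans huz)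
  rw [← abv.map_mul u z, ← abv.map_mul d]
  refine h.add_eq_right_of_lt (hsmall.trans_le ?_)
  rw [abv.map_mul d]
  exact le_mul_of_one_le_left (abv.nonneg _) hd

theorem abv_normForm_of_lt (h : IsNonarchimedean abv) {b c y u : E} (hbc : 1 ≤ abv (b - c))
    (hyu : abv y < abv u) (huz : abv u < abv (c * u + y)) :
    abv (normForm b u (c * u + y)) = abv (b - c) * (abv u * abv (c * u + y)) := by
  rw [← abv_sq_sub_mul_add_mul h hbc hyu huz, normForm]
  congr 1
  ring

theorem abv_normForm_of_gt (h : IsNonarchimedean abv) {b c y u : E} (hbc : 1 ≤ abv (b - c))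
    (hyu : abv u < abv y) (huz : abv (c * u + y) < abv u) :
    abv (normForm b y u) = abv (b - c) * (abv y * abv u) := by
  rw [mul_comm (abv y), abv.map_sub, ← abv_sq_sub_mul_add_mul h (abv.map_sub b c ▸ hbc) huz hyu,
    normForm, ← abv.map_neg]
  congr 1
  ring

end Nonarchimedean

/-- The binary form `normForm b` pulled back along the linear map with columns `(q₀, q₁)` and
`(-p₀, -p₁)`, dehomogenized. -/
def normFormPullback {R : Type*} [CommRing R] (b q₀ p₀ q₁ p₁ : R) : R[X] :=
  normForm (C b) (C q₀ * X - C p₀) (C q₁ * X - C p₁)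

section Pullback

variable {R : Type*} [CommRing R]

theorem normFormPullback_eq (b q₀ p₀ q₁ p₁ : R) :
    normFormPullback b q₀ p₀ q₁ p₁ = C (normForm b q₀ q₁) * X ^ 2 +
      C (2 * (q₁ * p₁ - q₀ * p₀) - b * (q₀ * p₁ + q₁ * p₀)) * X + C (normForm b p₀ p₁) := by
  simp only [normFormPullback, normForm, C_add, C_sub, C_mul, C_pow, C_ofNat]
  ring

theorem coeff_two_normFormPullback (b q₀ p₀ q₁ p₁ : R) :
    (normFormPullback b q₀ p₀ q₁ p₁).coeff 2 = normForm b q₀ q₁ := by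
  rw [normFormPullback_eq]
  simp

theorem eval₂_normFormPullback {E : Type*} [CommRing E] (f : R →+* E) (b q₀ p₀ q₁ p₁ : R) (x : E) :
    eval₂ f x (normFormPullback b q₀ p₀ q₁ p₁) =
      normForm (f b) (f q₀ * x - f p₀) (f q₁ * x - f p₁) := by
  rw [normFormPullback, ← coe_eval₂RingHom, map_normForm]
  simp

theorem derivative_normFormPullback (b q₀ p₀ q₁ p₁ : R) :
    derivative (normFormPullback b q₀ p₀ q₁ p₁) =
      2 * (C q₀ * (C b * (C q₁ * X - C p₁) + (C q₀ * X - C p₀)) - C q₁ * (C q₁ * X - C p₁)) -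
        C (b * (q₁ * p₀ - q₀ * p₁)) := by
  simp only [normFormPullback, normForm, derivative_add, derivative_sub, derivative_mul,
    derivative_sq, derivative_C, derivative_X, C_sub, C_mul, C_ofNat]
  ring

theorem isPrimitive_normFormPullback {b q₀ p₀ q₁ p₁ : R} (hdet : IsUnit (q₁ * p₀ - q₀ * p₁)) :
    (normFormPullback b q₀ p₀ q₁ p₁).IsPrimitive := by
  intro r hr
  obtain ⟨e, he⟩ := hdet.exists_right_inv
  -- The form represents `1`, at the point which the linear map sends to `(-1, 0)`.
  have represents_one : normForm b q₀ q₁ * (e * p₁) ^ 2 +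
      (2 * (q₁ * p₁ - q₀ * p₀) - b * (q₀ * p₁ + q₁ * p₀)) * (e * p₁ * (e * q₁)) +
      normForm b p₀ p₁ * (e * q₁) ^ 2 = 1 := by
    unfold normForm
    linear_combination ((q₁ * p₀ - q₀ * p₁) * e + 1) * he
  rw [C_dvd_iff_dvd_coeff, normFormPullback_eq] at hr
  have h₂ : r ∣ normForm b q₀ q₁ := by simpa [coeff_X, coeff_C] using hr 2
  have h₁ : r ∣ 2 * (q₁ * p₁ - q₀ * p₀) - b * (q₀ * p₁ + q₁ * p₀) := by
    simpa [coeff_X, coeff_C] using hr 1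
  have h₀ : r ∣ normForm b p₀ p₁ := by simpa using hr 0
  refine isUnit_of_dvd_one (represents_one ▸ ?_)
  exact ((h₂.mul_right _).add (h₁.mul_right _)).add (h₀.mul_right _)

end Pullback

theorem irreducible_natDegree_normFormPullback {k : Type*} [Field k] {b q₀ p₀ q₁ p₁ : k[X]}
    (hb : b.natDegree ≠ 0) (hdet : IsUnit (q₁ * p₀ - q₀ * p₁)) :
    Irreducible (normFormPullback b q₀ p₀ q₁ p₁) ∧
      (normFormPullback b q₀ p₀ q₁ p₁).natDegree = 2 := by
  let K := FractionRing k[X]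
  have hinj : Function.Injective (algebraMap k[X] K) := IsFractionRing.injective k[X] K
  have hlead : normForm b q₀ q₁ ≠ 0 := fun h0 => by
    have := congrArg (algebraMap k[X] K) h0
    rw [map_normForm, map_zero] at this
    obtain ⟨h₀, h₁⟩ := eq_zero_of_normForm_eq_zero hb this
    rw [map_eq_zero_iff _ hinj] at h₀ h₁
    simp [h₀, h₁] at hdet
  have hdeg : (normFormPullback b q₀ p₀ q₁ p₁).natDegree = 2 := by
    rw [normFormPullback_eq]
    exact natDegree_quadratic hlead
  refine ⟨?_, hdeg⟩
  rw [(isPrimitive_normFormPullback hdet).irreducible_iff_irreducible_map_fraction_map (K := K)]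
  have hdeg_map := (natDegree_map_eq_of_injective hinj _).trans hdeg
  refine irreducible_of_degree_le_three_of_not_isRoot (by simp [hdeg_map]) fun x hx => ?_
  rw [IsRoot, eval_map, eval₂_normFormPullback] at hx
  obtain ⟨h₀, h₁⟩ := eq_zero_of_normForm_eq_zero hb hx
  refine hdet.ne_zero (hinj ?_)
  simp only [map_sub, map_mul, map_zero]
  linear_combination algebraMap k[X] K q₀ * h₁ - algebraMap k[X] K q₁ * h₀

end NormForm

section ContinuedFraction

variable {k : Type} [Field k]

theorem qSeq_mul_pSeq_sub (a : ℕ → k[X]) (n : ℕ) :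
    qSeq k a (n + 1) * pSeq k a n - qSeq k a n * pSeq k a (n + 1) = (-1) ^ n := by
  induction n with
  | zero => simp [qSeq, pSeq]
  | succ n ih =>
    rw [pow_succ, ← ih, qSeq, pSeq]
    ring

section Degree

variable {a : ℕ → k[X]}

theorem degree_qSeq_lt_succ (ha : ∀ n, 1 ≤ n → 1 ≤ (a n).natDegree) (n : ℕ) :
    (qSeq k a n).degree < (qSeq k a (n + 1)).degree := by
  induction n with
  | zero => simp [qSeq]
  | succ n ih =>
    have hmul : (qSeq k a (n + 1)).degree < (a (n + 1) * qSeq k a (n + 1)).degree := by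
      have ha1 := ha (n + 1) n.succ_pos
      refine degree_lt_degree ?_
      rw [natDegree_mul (ne_zero_of_natDegree_gt ha1) (ne_zero_of_degree_gt ih)]
      lia
    rwa [qSeq, degree_add_eq_left_of_degree_lt (ih.trans hmul)]

theorem qSeq_succ_ne_zero (ha : ∀ n, 1 ≤ n → 1 ≤ (a n).natDegree) (n : ℕ) :
    qSeq k a (n + 1) ≠ 0 :=
  ne_zero_of_degree_gt (degree_qSeq_lt_succ ha n)

theorem natDegree_qSeq_succ (ha : ∀ n, 1 ≤ n → 1 ≤ (a n).natDegree) {n : ℕ} (hn : 1 ≤ n) :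
    (qSeq k a (n + 1)).natDegree = (a n).natDegree + (qSeq k a n).natDegree := by
  obtain ⟨n, rfl⟩ := Nat.exists_eq_add_of_le' hn
  have hq := qSeq_succ_ne_zero ha n
  have ha0 := ne_zero_of_natDegree_gt (ha (n + 1) hn)
  rw [qSeq, natDegree_add_eq_left_of_degree_lt, natDegree_mul ha0 hq]
  refine (degree_qSeq_lt_succ ha n).trans_le ?_
  rw [mul_comm]
  exact degree_le_mul_left _ ha0

theorem le_natDegree_qSeq_of_lt (ha : ∀ n, 1 ≤ n → 1 ≤ (a n).natDegree) {m n : ℕ} (hmn : m < n) :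
    m ≤ (qSeq k a n).natDegree := by
  induction m generalizing n with
  | zero => exact Nat.zero_le _
  | succ m ih =>
    obtain ⟨n, rfl⟩ := Nat.exists_eq_add_of_lt (Nat.zero_lt_of_lt hmn)
    have hn : 1 ≤ 0 + n := Nat.one_le_of_lt (Nat.lt_of_succ_lt_succ hmn)
    rw [natDegree_qSeq_succ ha hn]
    have := ih (Nat.lt_of_succ_lt_succ hmn)
    have := ha (0 + n) hn
    lia

end Degree

section Remainder

variable {E : Type*} [Field E]

/-- The `n`-th remainder `q_{n-1} x - p_{n-1}` of the continued fraction `[a 0; a 1, a 2, …]`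
at `x`, indexed as `qSeq` and `pSeq` are. -/
def cfRemainder (ι : k[X] →+* E) (x : E) (a : ℕ → k[X]) (n : ℕ) : E :=
  ι (qSeq k a n) * x - ι (pSeq k a n)

theorem cfRemainder_add_two (ι : k[X] →+* E) (x : E) (a : ℕ → k[X]) (n : ℕ) :
    cfRemainder ι x a (n + 2) =
      ι (a (n + 1)) * cfRemainder ι x a (n + 1) + cfRemainder ι x a n := by
  simp only [cfRemainder, qSeq, pSeq, map_add, map_mul]
  ring

/-- `x` has the continued fraction expansion `[a 0; a 1, a 2, …]` with respect to `abv`; the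
distance to the convergents is expressed by the remainders `cfRemainder`. -/
structure IsDegreeCF (abv : AbsoluteValue E ℝ) (ι : k[X] →+* E) (q : ℝ) (x : E)
    (a : ℕ → k[X]) : Prop where
  one_le_natDegree : ∀ n, 1 ≤ n → 1 ≤ (a n).natDegree
  abv_cfRemainder : ∀ n, abv (cfRemainder ι x a n) = q ^ (-((qSeq k a (n + 1)).natDegree : ℝ))

namespace IsDegreeCF

variable {abv : AbsoluteValue E ℝ} {ι : k[X] →+* E} {q : ℝ} {x : E} {a : ℕ → k[X]}

theorem abv_le_one (hx : IsDegreeCF abv ι q x a) (h : IsDegreeAbs abv ι q) (ha0 : a 0 = 0) :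
    abv x ≤ 1 := by
  have := hx.abv_cfRemainder 1
  simp only [cfRemainder, qSeq, pSeq, ha0, map_one, map_zero, one_mul, sub_zero] at this
  rw [this]
  exact Real.rpow_le_one_of_one_le_of_nonpos h.one_lt.le (by simp)

theorem natDegree_qSeq_lt_succ (hx : IsDegreeCF abv ι q x a) (n : ℕ) :
    (qSeq k a (n + 1)).natDegree < (qSeq k a (n + 2)).natDegree :=
  natDegree_lt_natDegree (qSeq_succ_ne_zero hx.one_le_natDegree n)
    (degree_qSeq_lt_succ hx.one_le_natDegree (n + 1))

theorem abv_cfRemainder_succ_lt (hx : IsDegreeCF abv ι q x a) (h : IsDegreeAbs abv ι q) (n : ℕ) :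
    abv (cfRemainder ι x a (n + 1)) < abv (cfRemainder ι x a n) := by
  rw [hx.abv_cfRemainder, hx.abv_cfRemainder, h.rpow_lt_rpow_iff, neg_lt_neg_iff]
  exact_mod_cast hx.natDegree_qSeq_lt_succ n

theorem abv_qSeq_mul_cfRemainder_le_one (hx : IsDegreeCF abv ι q x a) (h : IsDegreeAbs abv ι q)
    {m n : ℕ} (hmn : (qSeq k a m).natDegree ≤ (qSeq k a (n + 1)).natDegree) :
    abv (ι (qSeq k a m) * cfRemainder ι x a n) ≤ 1 := by
  rw [← Real.rpow_zero q]
  refine h.abv_mul_le_rpow (h.map_le le_rfl) (hx.abv_cfRemainder n).le ?_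
  rw [← sub_eq_add_neg, sub_nonpos]
  exact_mod_cast hmn

end IsDegreeCF

end Remainder

section PeriodicTail

/-- The quadratic polynomial vanishing at `[a 0; a 1, …, a n, b, b, b, …]`: the value `θ` of
`[b; b, b, …]` satisfies `normForm b (-θ) 1 = 0`, and at this point `-θ` is the ratio of two
successive remainders. -/
def periodicTailPoly (b : k[X]) (a : ℕ → k[X]) (n : ℕ) : k[X][X] :=
  normFormPullback b (qSeq k a n) (pSeq k a n) (qSeq k a (n + 1)) (pSeq k a (n + 1))

variable {b c : k[X]} {a : ℕ → k[X]}

theorem irreducible_natDegree_periodicTailPoly (hb : b.natDegree ≠ 0) (a : ℕ → k[X]) (n : ℕ) :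
    Irreducible (periodicTailPoly b a n) ∧ (periodicTailPoly b a n).natDegree = 2 :=
  irreducible_natDegree_normFormPullback hb <| by
    rw [qSeq_mul_pSeq_sub]
    exact isUnit_one.neg.pow n

theorem coeff_two_periodicTailPoly (b : k[X]) (a : ℕ → k[X]) (n : ℕ) :
    (periodicTailPoly b a n).coeff 2 = normForm b (qSeq k a n) (qSeq k a (n + 1)) :=
  coeff_two_normFormPullback ..

variable {E : Type*} [Field E] {abv : AbsoluteValue E ℝ} {ι : k[X] →+* E} {q : ℝ} {x : E}

theorem eval₂_periodicTailPoly (ι : k[X] →+* E) (b : k[X]) (a : ℕ → k[X]) (n : ℕ) (x : E) :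
    eval₂ ι x (periodicTailPoly b a n) =
      normForm (ι b) (cfRemainder ι x a n) (cfRemainder ι x a (n + 1)) :=
  eval₂_normFormPullback ..

theorem eval₂_periodicTailPoly_succ (ι : k[X] →+* E) {n : ℕ} (hn : a (n + 1) = b) (x : E) :
    eval₂ ι x (periodicTailPoly b a (n + 1)) = -eval₂ ι x (periodicTailPoly b a n) := by
  rw [eval₂_periodicTailPoly, eval₂_periodicTailPoly, cfRemainder_add_two, hn, normForm_mul_add]

theorem abv_eval₂_periodicTailPoly_eq (abv : AbsoluteValue E ℝ) (ι : k[X] →+* E) (x : E) {m n : ℕ}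
    (hmn : m ≤ n) (ha : ∀ j, m < j → j ≤ n → a j = b) :
    abv (eval₂ ι x (periodicTailPoly b a m)) = abv (eval₂ ι x (periodicTailPoly b a n)) := by
  induction n, hmn using Nat.le_induction with
  | base => rfl
  | succ n hmn ih =>
    rw [eval₂_periodicTailPoly_succ ι (ha (n + 1) (by lia) le_rfl), abv.map_neg]
    exact ih fun j hmj hjn => ha j hmj (hjn.trans n.le_succ)

namespace IsDegreeCF

theorem abv_eval₂_periodicTailPoly (hx : IsDegreeCF abv ι q x a) (h : IsDegreeAbs abv ι q)
    (hbc : b ≠ c) {m n : ℕ} (hmn : m < n) (hb : ∀ j, m < j → j < n → a j = b) (hc : a n = c) :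
    abv (eval₂ ι x (periodicTailPoly b a m)) =
      q ^ (((b - c).natDegree : ℝ) -
        ((qSeq k a n).natDegree + (qSeq k a (n + 1)).natDegree)) := by
  obtain ⟨n, rfl⟩ := Nat.exists_eq_add_of_lt hmn
  set l := m + n
  have hrec : cfRemainder ι x a (l + 2) =
      ι c * cfRemainder ι x a (l + 1) + cfRemainder ι x a l := by
    rw [cfRemainder_add_two, hc]
  have hbc0 : b - c ≠ 0 := sub_ne_zero.2 hbc
  rw [abv_eval₂_periodicTailPoly_eq abv ι x (Nat.le_add_right m n)
      fun j hmj hjl => hb j hmj (Nat.lt_succ_of_le hjl), eval₂_periodicTailPoly,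
    abv_normForm_of_gt h.isNonarchimedean (c := ι c)
      (by simpa only [map_sub] using h.one_le_map hbc0) (hx.abv_cfRemainder_succ_lt h l)
      (hrec ▸ hx.abv_cfRemainder_succ_lt h (l + 1)),
    ← map_sub ι, h.map_eq _ hbc0, hx.abv_cfRemainder, hx.abv_cfRemainder, ← Real.rpow_add h.pos,
    ← Real.rpow_add h.pos]
  congr 1
  ring

theorem abv_eval₂_derivative_periodicTailPoly (hx : IsDegreeCF abv ι q x a)
    (h : IsDegreeAbs abv ι q) {n : ℕ} (hn : a (n + 1) = b) :
    abv (eval₂ ι x (derivative (periodicTailPoly b a n))) = q ^ (b.natDegree : ℝ) := by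
  have hb1 : 1 ≤ b.natDegree := hn ▸ hx.one_le_natDegree (n + 1) n.succ_pos
  have hderiv : eval₂ ι x (derivative (periodicTailPoly b a n)) =
      ι 2 * (ι (qSeq k a n) * cfRemainder ι x a (n + 2) -
        ι (qSeq k a (n + 1)) * cfRemainder ι x a (n + 1)) - ι (b * (-1) ^ n) := by
    rw [cfRemainder_add_two, hn, periodicTailPoly, derivative_normFormPullback,
      qSeq_mul_pSeq_sub]
    simp only [eval₂_sub, eval₂_add, eval₂_mul, eval₂_C, eval₂_X, eval₂_ofNat, map_ofNat,
      cfRemainder]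
  have hsmall : abv (ι 2 * (ι (qSeq k a n) * cfRemainder ι x a (n + 2) -
      ι (qSeq k a (n + 1)) * cfRemainder ι x a (n + 1))) ≤ 1 := by
    have h2 : abv (ι 2) ≤ 1 := by simpa using h.map_le (natDegree_ofNat (R := k) 2).le
    have hdeg := natDegree_le_natDegree (degree_qSeq_lt_succ hx.one_le_natDegree n).le
    have := hx.natDegree_qSeq_lt_succ n
    have := hx.natDegree_qSeq_lt_succ (n + 1)
    rw [abv.map_mul]
    exact mul_le_one₀ h2 (abv.nonneg _) (abv_sub_le h.isNonarchimedean
      (hx.abv_qSeq_mul_cfRemainder_le_one h (by lia))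
      (hx.abv_qSeq_mul_cfRemainder_le_one h (by lia)))
  have hlarge : abv (ι (b * (-1) ^ n)) = q ^ (b.natDegree : ℝ) := by
    rw [map_mul, abv.map_mul, map_pow, map_neg, map_one, abv.map_pow, abv.map_neg, abv.map_one,
      one_pow, mul_one, h.map_eq b (ne_zero_of_natDegree_gt hb1)]
  rw [hderiv, ← neg_sub, abv.map_neg, abv_sub_eq_left_of_lt h.isNonarchimedean, hlarge]
  rw [hlarge]
  exact hsmall.trans_lt (Real.one_lt_rpow h.one_lt (by exact_mod_cast hb1))

theorem natDegree_coeff_two_periodicTailPoly (hx : IsDegreeCF abv ι q x a)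
    (h : IsDegreeAbs abv ι q) (hbc : b ≠ c) {n : ℕ} (hn : 1 ≤ n) (hc : a n = c) :
    ((periodicTailPoly b a n).coeff 2).natDegree =
      (b - c).natDegree + (qSeq k a n).natDegree + (qSeq k a (n + 1)).natDegree := by
  obtain ⟨n, rfl⟩ := Nat.exists_eq_add_of_le' hn
  have hdeg := degree_qSeq_lt_succ hx.one_le_natDegree
  have hrec : ι (qSeq k a (n + 2)) = ι c * ι (qSeq k a (n + 1)) + ι (qSeq k a n) := by
    rw [qSeq, hc, map_add, map_mul]
  have hbc0 : b - c ≠ 0 := sub_ne_zero.2 hbc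
  have habv : abv (ι ((periodicTailPoly b a (n + 1)).coeff 2)) =
      abv (ι ((b - c) * (qSeq k a (n + 1) * qSeq k a (n + 2)))) := by
    rw [coeff_two_periodicTailPoly, map_normForm, hrec, abv_normForm_of_lt h.isNonarchimedean
        (by simpa only [map_sub] using h.one_le_map hbc0) (h.map_lt_map (hdeg n))
        (hrec ▸ h.map_lt_map (hdeg (n + 1))),
      ← hrec, map_mul ι, map_mul ι, abv.map_mul, abv.map_mul, map_sub ι]
  rw [add_assoc, ← natDegree_mul (qSeq_succ_ne_zero hx.one_le_natDegree n)
    (qSeq_succ_ne_zero hx.one_le_natDegree (n + 1)), ← natDegree_mul hbc0]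
  · exact (h.natDegree_le_of_map_le_map habv.le).antisymm (h.natDegree_le_of_map_le_map habv.ge)
  · exact mul_ne_zero (qSeq_succ_ne_zero hx.one_le_natDegree n)
      (qSeq_succ_ne_zero hx.one_le_natDegree (n + 1))

theorem logHeight_periodicTailPoly (hx : IsDegreeCF abv ι q x a) (h : IsDegreeAbs abv ι q)
    (hx1 : abv x ≤ 1) (hbc : b ≠ c) {m n : ℕ} (hm : a m = c) (hmn : m + 2 ≤ n)
    (hb : ∀ j, m < j → j < n → a j = b) (hn : a n = c)
    (hbm : b.natDegree ≤ (qSeq k a m).natDegree) :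
    logHeight (periodicTailPoly b a m) =
      (b - c).natDegree + (qSeq k a m).natDegree + (qSeq k a (m + 1)).natDegree := by
  have hsucc : a (m + 1) = b := hb (m + 1) (by lia) (by lia)
  have hb1 : 1 ≤ b.natDegree := hsucc ▸ hx.one_le_natDegree (m + 1) m.succ_pos
  have hm1 : 1 ≤ m := by
    by_contra hm0
    simp only [Nat.eq_zero_of_not_pos hm0, qSeq, natDegree_zero] at hbm
    lia
  obtain ⟨hirr, hdeg⟩ := irreducible_natDegree_periodicTailPoly (by lia : b.natDegree ≠ 0) a m
  have hlead : (periodicTailPoly b a m).coeff 2 ≠ 0 := hdeg ▸ leadingCoeff_ne_zero.2 hirr.ne_zero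
  have hlead_deg := hx.natDegree_coeff_two_periodicTailPoly h hbc hm1 hm
  rw [← hlead_deg]
  refine h.logHeight_eq_natDegree_coeff_two hdeg.le hx1 ?_ ?_
  · rw [hx.abv_eval₂_periodicTailPoly h hbc (by lia) hb hn, h.map_eq _ hlead, h.rpow_le_rpow_iff,
      hlead_deg]
    push_cast
    linarith [(qSeq k a n).natDegree.cast_nonneg (α := ℝ),
      (qSeq k a (n + 1)).natDegree.cast_nonneg (α := ℝ),
      (qSeq k a m).natDegree.cast_nonneg (α := ℝ),
      (qSeq k a (m + 1)).natDegree.cast_nonneg (α := ℝ)]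
  · rw [hx.abv_eval₂_derivative_periodicTailPoly h hsucc, h.map_eq _ hlead, h.rpow_le_rpow_iff]
    exact_mod_cast (by lia : b.natDegree ≤ ((periodicTailPoly b a m).coeff 2).natDegree)

theorem natDegree_qSeq_of_block (hx : IsDegreeCF abv ι q x a) {m n : ℕ} (hmn : m < n)
    (hb : ∀ j, m < j → j < n → a j = b) :
    ((qSeq k a n).natDegree : ℝ) = (qSeq k a (m + 1)).natDegree + (n - (m + 1)) * b.natDegree := by
  induction n, hmn using Nat.le_induction with
  | base => simp
  | succ n hmn ih =>
    rw [natDegree_qSeq_succ hx.one_le_natDegree (by lia), hb n hmn n.lt_succ_self]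
    push_cast
    rw [ih fun j hmj hjn => hb j hmj (hjn.trans n.lt_succ_self)]
    ring

end IsDegreeCF

end PeriodicTail

end ContinuedFraction

section Blocks

/-- The sequence `a` takes the value `c` at each of the positions `N i`, and the value `b` at all
positions strictly between `N i` and `N (i + 1)`. -/
structure IsBlockSeq {A : Type*} (a : ℕ → A) (b c : A) (N : ℕ → ℕ) : Prop where
  apply_eq : ∀ i, a (N i) = c
  apply_eq_of_lt_of_lt : ∀ i j, N i < j → j < N (i + 1) → a j = b

theorem IsBlockSeq.comp_add {A : Type*} {a : ℕ → A} {b c : A} {N : ℕ → ℕ}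
    (h : IsBlockSeq a b c N) (m : ℕ) : IsBlockSeq a b c fun i => N (i + m) where
  apply_eq i := h.apply_eq (i + m)
  apply_eq_of_lt_of_lt i j hij hji :=
    h.apply_eq_of_lt_of_lt (i + m) j hij (by rwa [add_right_comm] at hji)

variable {k : Type} [Field k] {E : Type*} [Field E] {abv : AbsoluteValue E ℝ} {ι : k[X] →+* E}
  {q : ℝ} {x : E} {a : ℕ → k[X]} {b c : k[X]} {N : ℕ → ℕ} {w : ℝ}

namespace IsDegreeCF

theorem natDegree_qSeq_of_isBlockSeq (hx : IsDegreeCF abv ι q x a) (hN : IsBlockSeq a b c N)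
    (hlt : ∀ i, N i < N (i + 1)) (i : ℕ) :
    ((qSeq k a (N i + 1)).natDegree : ℝ) = (qSeq k a (N 0 + 1)).natDegree +
      (N i - N 0) * b.natDegree + i * (c.natDegree - b.natDegree : ℝ) := by
  induction i with
  | zero => simp
  | succ i ih =>
    rw [natDegree_qSeq_succ hx.one_le_natDegree (Nat.one_le_of_lt (hlt i)), hN.apply_eq]
    push_cast
    rw [hx.natDegree_qSeq_of_block (hlt i) (hN.apply_eq_of_lt_of_lt i), ih]
    ring

theorem logHeight_periodicTailPoly_of_isBlockSeq (hx : IsDegreeCF abv ι q x a)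
    (h : IsDegreeAbs abv ι q) (hx1 : abv x ≤ 1) (hbc : b ≠ c) (hN : IsBlockSeq a b c N) {i : ℕ}
    (hgap : N i + 2 ≤ N (i + 1)) (hbN : b.natDegree < N i) :
    logHeight (periodicTailPoly b a (N i)) =
      (b - c).natDegree + (qSeq k a (N i)).natDegree + (qSeq k a (N i + 1)).natDegree :=
  hx.logHeight_periodicTailPoly h hx1 hbc (hN.apply_eq i) hgap (hN.apply_eq_of_lt_of_lt i)
    (hN.apply_eq (i + 1)) (le_natDegree_qSeq_of_lt hx.one_le_natDegree hbN)

theorem hasGrowthRatio_logHeight_periodicTailPoly (hx : IsDegreeCF abv ι q x a)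
    (h : IsDegreeAbs abv ι q) (hx1 : abv x ≤ 1) (hb : b.natDegree ≠ 0) (hbc : b ≠ c)
    (hN : IsBlockSeq a b c N) (hgrowth : HasGrowthRatio (fun i => (N i : ℝ)) w) (hw : 1 < w)
    (hgap : ∀ i, N i + 2 ≤ N (i + 1)) (hbN : ∀ i, b.natDegree < N i) :
    HasGrowthRatio (fun i => (logHeight (periodicTailPoly b a (N i)) : ℝ)) w := by
  have hsucc i : ((qSeq k a (N i + 1)).natDegree : ℝ) =
      c.natDegree + (qSeq k a (N i)).natDegree := by
    rw [natDegree_qSeq_succ hx.one_le_natDegree (Nat.one_le_of_lt (hbN i)), hN.apply_eq,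
      Nat.cast_add]
  convert hgrowth.add_mul_natCast_add_mul hw ((b - c).natDegree - c.natDegree +
    2 * ((qSeq k a (N 0 + 1)).natDegree - N 0 * b.natDegree))
    (2 * (c.natDegree - b.natDegree)) (g := 2 * b.natDegree) (by positivity) using 2 with i
  rw [hx.logHeight_periodicTailPoly_of_isBlockSeq h hx1 hbc hN (hgap i) (hbN i)]
  push_cast
  linarith [hsucc i,
    hx.natDegree_qSeq_of_isBlockSeq hN (fun i => Nat.lt_of_succ_lt (hgap i)) i]

theorem isQuadApproxSeq_periodicTailPoly (hx : IsDegreeCF abv ι q x a) (h : IsDegreeAbs abv ι q)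
    (ha0 : a 0 = 0) (hbc : b ≠ c) (hN : IsBlockSeq a b c N)
    (hgrowth : HasGrowthRatio (fun i => (N i : ℝ)) w) (hw : 1 < w)
    (hgap : ∀ i, N i + 2 ≤ N (i + 1)) (hbN : ∀ i, b.natDegree < N i) :
    IsQuadApproxSeq abv ι q x (fun i => periodicTailPoly b a (N i)) w b.natDegree
      (2 * (b - c).natDegree) := by
  have hx1 := hx.abv_le_one h ha0
  have hsucc i : a (N i + 1) = b := hN.apply_eq_of_lt_of_lt i _ (N i).lt_succ_self (hgap i)
  have hb : b.natDegree ≠ 0 := by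
    rw [← hsucc 0]
    exact Nat.one_le_iff_ne_zero.1 (hx.one_le_natDegree _ (N 0).succ_pos)
  refine ⟨hx1, fun i => ?_,
    hx.hasGrowthRatio_logHeight_periodicTailPoly h hx1 hb hbc hN hgrowth hw hgap hbN⟩
  obtain ⟨hirr, hdeg⟩ := irreducible_natDegree_periodicTailPoly hb a (N i)
  refine ⟨hirr, hdeg, hx.abv_eval₂_derivative_periodicTailPoly h (hsucc i), ?_⟩
  rw [hx.abv_eval₂_periodicTailPoly h hbc (Nat.lt_of_succ_lt (hgap i))
      (hN.apply_eq_of_lt_of_lt i) (hN.apply_eq (i + 1)),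
    hx.logHeight_periodicTailPoly_of_isBlockSeq h hx1 hbc hN (hgap (i + 1)) (hbN (i + 1))]
  push_cast
  congr 1
  ring

theorem exists_isQuadApproxSeq (hx : IsDegreeCF abv ι q x a) (h : IsDegreeAbs abv ι q)
    (ha0 : a 0 = 0) (hbc : b ≠ c) (hN : IsBlockSeq a b c N)
    (hgrowth : HasGrowthRatio (fun i => (N i : ℝ)) w) (hw : 1 < w) :
    ∃ F β γ, IsQuadApproxSeq abv ι q x F w β γ := by
  have hgap := hgrowth.eventually_lt_linear (s := 1) (t := -1) (by linarith) 1
  have hlarge := hgrowth.tendsto_atTop.eventually_gt_atTop (b.natDegree : ℝ)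
  obtain ⟨m, hm⟩ := eventually_atTop.1 (hgap.and hlarge)
  refine ⟨_, _, _, hx.isQuadApproxSeq_periodicTailPoly h ha0 hbc (hN.comp_add m)
    (hgrowth.comp_add m) hw (fun i => ?_) fun i => ?_⟩
  · have := (hm (i + m) (Nat.le_add_left m i)).1
    have : N (i + m) + 1 < N (i + m + 1) := by
      rify
      linarith
    rwa [add_right_comm]
  · exact_mod_cast (hm (i + m) (Nat.le_add_left m i)).2

end IsDegreeCF

end Blocks

section BoundedHeight

theorem isDegreeAbs_of_X_of_C {k E : Type*} [Field k] [Field E] {abv : AbsoluteValue E ℝ}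
    {ι : k[X] →+* E} {q : ℝ} (hq : 1 < q) (hna : IsNonarchimedean abv) (hX : abv (ι X) = q)
    (hC : ∀ a : k, a ≠ 0 → abv (ι (C a)) = 1) : IsDegreeAbs abv ι q := by
  have hq0 : 0 < q := one_pos.trans hq
  have hmonomial {a : k} (ha : a ≠ 0) (n : ℕ) : abv (ι (C a * X ^ n)) = q ^ n := by
    rw [map_mul, map_pow, abv.map_mul, abv.map_pow, hX, hC a ha, one_mul]
  have hle (P : k[X]) : abv (ι P) ≤ q ^ P.natDegree := by
    rw [P.as_sum_range_C_mul_X_pow, map_sum, ← P.as_sum_range_C_mul_X_pow]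
    refine abv_sum_le hna (pow_pos hq0 _).le fun i hi => ?_
    rcases eq_or_ne (P.coeff i) 0 with h0 | h0
    · simpa [h0] using (pow_pos hq0 _).le
    · rw [hmonomial h0]
      exact pow_le_pow_right₀ hq.le (Finset.mem_range_succ_iff.1 hi)
  refine ⟨hq, hna, fun P hP => ?_⟩
  have hlead := hmonomial (leadingCoeff_ne_zero.2 hP) P.natDegree
  rw [← hlead.trans (Real.rpow_natCast q _).symm]
  nth_rw 1 [← P.eraseLead_add_C_mul_X_pow]
  rw [map_add]
  refine hna.add_eq_right_of_lt ?_
  rw [hlead]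
  rcases eq_or_ne P.eraseLead 0 with h0 | h0
  · simpa [h0] using pow_pos hq0 _
  · exact (hle _).trans_lt
      (pow_lt_pow_right₀ hq (natDegree_lt_natDegree h0 (degree_eraseLead_lt hP)))

theorem finite_setOf_natDegree_le_coeff_mem {R : Type*} [Semiring R] (n : ℕ) {U : Set R}
    (hU : U.Finite) : {P : R[X] | P.natDegree ≤ n ∧ ∀ i, P.coeff i ∈ U}.Finite := by
  refine Set.Finite.of_injOn (f := fun P (i : Fin (n + 1)) => P.coeff i)
    (t := {f : Fin (n + 1) → R | ∀ i, f i ∈ U}) (fun P hP i => hP.2 i) (fun P hP Q hQ hPQ => ?_)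
    (Set.Finite.pi' fun _ => hU)
  refine (ext_iff_natDegree_le hP.1 hQ.1).2 fun i hi => ?_
  exact congrFun hPQ ⟨i, Nat.lt_succ_of_le hi⟩

theorem finite_setOf_natDegree_le {R : Type*} [Semiring R] [Finite R] (n : ℕ) :
    {P : R[X] | P.natDegree ≤ n}.Finite := by
  simpa using finite_setOf_natDegree_le_coeff_mem n (Set.finite_univ (α := R))

theorem finite_setOf_logHeight_le {k : Type*} [CommSemiring k] [Finite k] (n M : ℕ) :
    {P : k[X][X] | P.natDegree ≤ n ∧ logHeight P ≤ M}.Finite := by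
  simpa only [logHeight_le_iff, Set.mem_ofPred_eq] using
    finite_setOf_natDegree_le_coeff_mem n (finite_setOf_natDegree_le (R := k) M)

theorem finite_setOf_root_logHeight_le {k E : Type*} [CommSemiring k] [Finite k] [Field E]
    {ι : k[X] →+* E} (hι : Function.Injective ι) (n M : ℕ) :
    {α : E | ∃ P : k[X][X], P ≠ 0 ∧ P.natDegree ≤ n ∧ logHeight P ≤ M ∧
      eval₂ ι α P = 0}.Finite := by
  classical
  refine (bUnion_roots_finite ι n (finite_setOf_natDegree_le (R := k) M)).subset ?_
  rintro α ⟨P, hP, hdeg, hM, hα⟩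
  refine Set.mem_biUnion (x := P) ⟨hdeg, logHeight_le_iff.1 hM⟩ ?_
  rw [Finset.mem_coe, Multiset.mem_toFinset,
      mem_roots ((Polynomial.map_ne_zero_iff hι).2 hP), IsRoot, eval_map, hα]

theorem associated_of_eval₂_eq_zero {R E : Type*} [CommRing R] [IsDomain R] [IsGCDMonoid R]
    [Field E] {ι : R →+* E} (hι : Function.Injective ι) {P Q : R[X]} (hP : Irreducible P)
    (hPdeg : P.natDegree ≠ 0) (hQ : Irreducible Q) {α : E} (hPα : eval₂ ι α P = 0)
    (hQα : eval₂ ι α Q = 0) : Associated P Q := by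
  have hprim := hP.isPrimitive hPdeg
  let ψ : FractionRing R →+* E := IsFractionRing.lift hι
  have eval_map_eq (S : R[X]) : eval₂ ψ α (S.map (algebraMap R _)) = eval₂ ι α S := by
    rw [eval₂_map]
    congr 1
    exact RingHom.ext (IsFractionRing.lift_algebraMap hι)
  have hdvd : P.map (algebraMap R (FractionRing R)) ∣ Q.map (algebraMap R _) := by
    refine (dvd_or_isCoprime _ _
      (hprim.irreducible_iff_irreducible_map_fraction_map.1 hP)).resolve_right ?_
    rintro ⟨S, T, hST⟩
    have := congrArg (eval₂ ψ α) hST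
    rw [eval₂_add, eval₂_mul, eval₂_mul, eval_map_eq, eval_map_eq, hPα, hQα, eval₂_one] at this
    simp at this
  exact hP.associated_of_dvd hQ (hprim.dvd_of_fraction_map_dvd_fraction_map hdvd)

theorem logHeight_eq_of_associated {R : Type*} [CommRing R] [IsDomain R] {P Q : R[X][X]}
    (hPQ : Associated P Q) : logHeight P = logHeight Q := by
  obtain ⟨u, rfl⟩ := hPQ
  obtain ⟨r, hr, hru⟩ := isUnit_iff.1 u.isUnit
  rcases eq_or_ne P 0 with rfl | hP
  · rw [zero_mul]
  · rw [← hru, mul_comm, logHeight_C_mul hr.ne_zero hP, natDegree_eq_zero_of_isUnit hr, zero_add]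

end BoundedHeight

section Exponents

theorem sSup_coe_eq_of_forall_lt {p : ℝ → Prop} {w : ℝ} (hlt : ∀ s < w, p s)
    (hgt : ∀ s, w < s → ¬ p s) : sSup {x : EReal | ∃ s : ℝ, x = (s : EReal) ∧ p s} = w := by
  refine le_antisymm (sSup_le ?_) (le_of_forall_lt fun y hy => ?_)
  · rintro _ ⟨s, rfl, hs⟩
    exact EReal.coe_le_coe_iff.2 (not_lt.1 fun h => hgt s h hs)
  · obtain ⟨s, hys, hsw⟩ := EReal.lt_iff_exists_real_btwn.1 hy
    exact hys.trans_le (le_sSup ⟨s, rfl, hlt s (EReal.coe_lt_coe_iff.1 hsw)⟩)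

theorem isMinPolyOf_minPolyPrim {k : Type} [Field k] {α : L k} (hα : IsAlgElem k α) :
    IsMinPolyOf k (minPolyPrim k α) α := by
  rw [minPolyPrim, dif_pos hα]
  exact hα.choose_spec

theorem isAlgElem_of_irreducible {k : Type} [Field k] {P : k[X][X]} (hP : Irreducible P)
    (hdeg : P.natDegree ≠ 0) {α : L k} (hα : eval₂ (φ k) α P = 0) : IsAlgElem k α := by
  have hlead : P.leadingCoeff.leadingCoeff ≠ 0 := by simpa using hP.ne_zero
  have hunit : IsUnit (C (C P.leadingCoeff.leadingCoeff⁻¹) : k[X][X]) :=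
    isUnit_C.2 (isUnit_C.2 (inv_ne_zero hlead).isUnit)
  have hirr := (irreducible_isUnit_mul hunit).2 hP
  have hdeg' : (C (C P.leadingCoeff.leadingCoeff⁻¹) * P).natDegree = P.natDegree :=
    natDegree_C_mul (by simpa using hP.ne_zero)
  refine ⟨_, ?_, hirr, hirr.isPrimitive (hdeg'.trans_ne hdeg), ?_, ?_⟩
  · exact hdeg' ▸ Nat.pos_of_ne_zero hdeg
  · rw [leadingCoeff_mul, leadingCoeff_C, Monic, leadingCoeff_mul, leadingCoeff_C,
      inv_mul_cancel₀ hlead]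
  · rw [evalL, eval₂_mul, hα, mul_zero]

variable {Fq} {v : L Fq → ℝ}

/-- An extension of `|·|` to the algebraic closure, as a bundled absolute value. -/
def IsAbsExt.absoluteValue (hv : IsAbsExt Fq v) : AbsoluteValue (L Fq) ℝ where
  toFun := v
  map_mul' := hv.map_mul
  nonneg' := hv.nonneg
  eq_zero' := hv.eq_zero_iff
  add_le' x y := (hv.add_le x y).trans (max_le_add_of_nonneg (hv.nonneg x) (hv.nonneg y))

namespace IsAbsExt

theorem isDegreeAbs (hv : IsAbsExt Fq v) :
    IsDegreeAbs hv.absoluteValue (φ Fq) (Fintype.card Fq) := by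
  refine isDegreeAbs_of_X_of_C (by exact_mod_cast Fintype.one_lt_card (α := Fq)) hv.add_le ?_
    fun a ha => ?_
  · have hX : φ Fq X = toL Fq (TT Fq) := by simp [φ, polyToK]
    have hT : TT Fq ≠ 0 := HahnSeries.single_ne_zero one_ne_zero
    have horder : (TT Fq).order = -1 := HahnSeries.order_single one_ne_zero
    simp [hX, absoluteValue, hv.extends_kabs, kabs, hT, horder]
  · have hC : φ Fq (C a) = toL Fq (HahnSeries.C a) := by simp [φ, polyToK]
    have hC0 : (HahnSeries.C a : K Fq) ≠ 0 := HahnSeries.C_ne_zero ha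
    change v (φ Fq (C a)) = 1
    rw [hC, hv.extends_kabs, kabs, if_neg hC0, HahnSeries.order_C, neg_zero, zpow_zero]

theorem absoluteValue_toL (hv : IsAbsExt Fq v) (f : K Fq) :
    hv.absoluteValue (toL Fq f) = kabs Fq f := hv.extends_kabs f

theorem kabs_polyToK (hv : IsAbsExt Fq v) (P : Fq[X]) :
    kabs Fq (polyToK Fq P) = hv.absoluteValue (φ Fq P) := (hv.extends_kabs _).symm

theorem kabs_evalK (hv : IsAbsExt Fq v) (P : Fq[X][X]) (ξ : K Fq) :
    kabs Fq (evalK Fq P ξ) = hv.absoluteValue (eval₂ (φ Fq) (toL Fq ξ) P) := by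
  rw [← hv.absoluteValue_toL, evalK, hom_eval₂, φ]

theorem Hpoly_eq (hv : IsAbsExt Fq v) {P : Fq[X][X]} (hP : P ≠ 0) :
    Hpoly Fq P = (Fintype.card Fq : ℝ) ^ (logHeight P : ℝ) := by
  have hle (i : ℕ) : kabs Fq (polyToK Fq (P.coeff i)) ≤ (Fintype.card Fq : ℝ) ^ (logHeight P : ℝ) :=
    hv.kabs_polyToK _ ▸ hv.isDegreeAbs.abv_coeff_le P i
  obtain ⟨i, hi, hdeg⟩ := exists_natDegree_coeff_eq_logHeight hP
  refine le_antisymm (ciSup_le hle) ?_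
  rw [← hdeg, ← hv.isDegreeAbs.map_eq _ hi, ← hv.kabs_polyToK]
  exact le_ciSup (f := fun i => kabs Fq (polyToK Fq (P.coeff i)))
    ⟨_, Set.forall_mem_range.2 hle⟩ i

theorem Hpoly_rpow (hv : IsAbsExt Fq v) {P : Fq[X][X]} (hP : P ≠ 0) (s : ℝ) :
    Hpoly Fq P ^ s = (Fintype.card Fq : ℝ) ^ (s * logHeight P) := by
  rw [hv.Hpoly_eq hP, ← Real.rpow_mul hv.isDegreeAbs.pos.le, mul_comm]

end IsAbsExt

theorem minPolyPrim_associated (hv : IsAbsExt Fq v) {P : Fq[X][X]} (hP : Irreducible P)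
    (hdeg : P.natDegree ≠ 0) {α : L Fq} (hα : eval₂ (φ Fq) α P = 0) :
    Associated (minPolyPrim Fq α) P := by
  obtain ⟨hdeg', hirr, -, -, hroot⟩ :=
    isMinPolyOf_minPolyPrim (isAlgElem_of_irreducible hP hdeg hα)
  exact associated_of_eval₂_eq_zero hv.isDegreeAbs.injective hirr hdeg'.ne' hP hroot hα

theorem wExp_eq_of_forall (hv : IsAbsExt Fq v) {n : ℕ} {ξ : K Fq} {w : ℝ}
    (hlt : ∀ s < w, ∀ M, ∃ P : Fq[X][X], P.natDegree ≤ n ∧ M ≤ logHeight P ∧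
      0 < hv.absoluteValue (eval₂ (φ Fq) (toL Fq ξ) P) ∧
      hv.absoluteValue (eval₂ (φ Fq) (toL Fq ξ) P) ≤ (Fintype.card Fq : ℝ) ^ (-(s * logHeight P)))
    (hgt : ∀ s, w < s → ∃ M, ∀ P : Fq[X][X], P ≠ 0 → P.natDegree ≤ n → M ≤ logHeight P →
      (Fintype.card Fq : ℝ) ^ (-(s * logHeight P)) <
        hv.absoluteValue (eval₂ (φ Fq) (toL Fq ξ) P)) :
    wExp Fq n ξ = w := by
  have ne_zero {P : Fq[X][X]} (h : 0 < hv.absoluteValue (eval₂ (φ Fq) (toL Fq ξ) P)) : P ≠ 0 := by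
    rintro rfl
    simp at h
  refine sSup_coe_eq_of_forall_lt (fun s hs => ?_) fun s hs hinf => ?_
  · refine Set.Infinite.of_image logHeight (Set.infinite_of_forall_exists_gt fun M => ?_)
    obtain ⟨P, hdeg, hM, hpos, hle⟩ := hlt s hs (M + 1)
    refine ⟨_, ⟨P, ⟨hdeg, ?_, ?_⟩, rfl⟩, hM⟩
    · rwa [hv.kabs_evalK]
    · rwa [hv.kabs_evalK, hv.Hpoly_rpow (ne_zero hpos), neg_mul]
  · obtain ⟨M, hM⟩ := hgt s hs
    refine hinf ((finite_setOf_logHeight_le n M).subset ?_)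
    rintro P ⟨hdeg, hpos, hle⟩
    rw [hv.kabs_evalK] at hpos hle
    rw [hv.Hpoly_rpow (ne_zero hpos), neg_mul] at hle
    exact ⟨hdeg, le_of_not_ge fun hP => (hM P (ne_zero hpos) hdeg hP).not_ge hle⟩

theorem wStarExp_eq_of_forall (hv : IsAbsExt Fq v) {n : ℕ} (hn : n ≠ 0) {ξ : K Fq} {w : ℝ}
    (hlt : ∀ s < w, ∀ M, ∃ (P : Fq[X][X]) (α : L Fq), Irreducible P ∧ P.natDegree = n ∧
      M ≤ logHeight P ∧ eval₂ (φ Fq) α P = 0 ∧ 0 < hv.absoluteValue (toL Fq ξ - α) ∧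
      hv.absoluteValue (toL Fq ξ - α) ≤ (Fintype.card Fq : ℝ) ^ (-((s + 1) * logHeight P)))
    (hgt : ∀ s, w < s → ∃ M, ∀ P : Fq[X][X], P ≠ 0 → P.natDegree ≤ n → M ≤ logHeight P →
      ∀ α, eval₂ (φ Fq) α P = 0 → (Fintype.card Fq : ℝ) ^ (-((s + 1) * logHeight P)) <
        hv.absoluteValue (toL Fq ξ - α)) :
    wStarExp Fq v n ξ = w := by
  have exponent_eq (s H : ℝ) : (-s - 1) * H = -((s + 1) * H) := by ring
  refine sSup_coe_eq_of_forall_lt (fun s hs => ?_) fun s hs hinf => ?_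
  · refine Set.Infinite.of_image (fun α => logHeight (minPolyPrim Fq α))
      (Set.infinite_of_forall_exists_gt fun M => ?_)
    obtain ⟨P, α, hP, hdeg, hM, hα, hpos, hle⟩ := hlt s hs (M + 1)
    have hdeg0 := hdeg.trans_ne hn
    have hassoc := minPolyPrim_associated hv hP hdeg0 hα
    have hheight := logHeight_eq_of_associated hassoc
    refine ⟨_, ⟨α, ⟨isAlgElem_of_irreducible hP hdeg0 hα, ?_, hpos, ?_⟩, rfl⟩, ?_⟩
    · rw [degAlg, natDegree_eq_of_degree_eq (degree_eq_degree_of_associated hassoc), hdeg]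
    · rwa [heightAlg, hv.Hpoly_rpow (hassoc.ne_zero_iff.2 hP.ne_zero), hheight, exponent_eq]
    · exact hM.trans_eq hheight.symm
  · obtain ⟨M, hM⟩ := hgt s hs
    refine hinf ((finite_setOf_root_logHeight_le hv.isDegreeAbs.injective n M).subset ?_)
    rintro α ⟨halg, hdeg, -, hle⟩
    obtain ⟨-, hirr, -, -, hroot⟩ := isMinPolyOf_minPolyPrim halg
    rw [heightAlg, hv.Hpoly_rpow hirr.ne_zero, exponent_eq] at hle
    exact ⟨_, hirr.ne_zero, hdeg, le_of_not_ge fun h =>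
      (hM _ hirr.ne_zero hdeg h α hroot).not_ge hle, hroot⟩

theorem IsQuadApproxSeq.exponents_eq (hv : IsAbsExt Fq v) {ξ : K Fq} {F : ℕ → Fq[X][X]} {w : ℝ}
    {β γ : ℕ} (hF : IsQuadApproxSeq hv.absoluteValue (φ Fq) (Fintype.card Fq) (toL Fq ξ) F w β γ)
    (hw : (5 + √17) / 2 < w) :
    wStarExp Fq v 2 ξ = ((w - 1 : ℝ) : EReal) ∧ wExp Fq 2 ξ = (w : EReal) := by
  refine ⟨wStarExp_eq_of_forall hv two_ne_zero (fun s hs M => ?_) fun s hs =>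
      hF.exists_lt_abv_sub_root hv.isDegreeAbs hw hs,
    wExp_eq_of_forall hv (fun s hs M => ?_) fun s hs =>
      hF.exists_lt_abv_eval hv.isDegreeAbs hw hs⟩
  · obtain ⟨i, α, hM, hα, hpos, hle⟩ := hF.exists_abv_sub_root_le hv.isDegreeAbs hs M
    exact ⟨F i, α, (hF.approx i).irreducible, (hF.approx i).natDegree_eq, hM, hα, hpos, hle⟩
  · obtain ⟨i, hM, hpos, hle⟩ := hF.exists_abv_eval_le hv.isDegreeAbs hs M
    exact ⟨F i, (hF.approx i).natDegree_eq.le, hM, hpos, hle⟩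

end Exponents

section Main

theorem IsCFOf.isDegreeCF {Fq : Type} [Field Fq] [Fintype Fq] {v : L Fq → ℝ}
    (hv : IsAbsExt Fq v) {ξ : K Fq} {a : ℕ → Fq[X]} (hξ : IsCFOf Fq ξ a) :
    IsDegreeCF hv.absoluteValue (φ Fq) (Fintype.card Fq) (toL Fq ξ) a := by
  have h := hv.isDegreeAbs
  refine ⟨hξ.1, fun n => ?_⟩
  rcases n with _ | n
  · simp [cfRemainder, qSeq, pSeq]
  have hq (n : ℕ) : hv.absoluteValue (φ Fq (qSeq Fq a (n + 1))) =
      (Fintype.card Fq : ℝ) ^ ((qSeq Fq a (n + 1)).natDegree : ℝ) :=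
    h.map_eq _ (qSeq_succ_ne_zero hξ.1 n)
  have hq0 : φ Fq (qSeq Fq a (n + 1)) ≠ 0 :=
    (map_ne_zero_iff _ h.injective).2 (qSeq_succ_ne_zero hξ.1 n)
  have hφ (P : Fq[X]) : toL Fq (polyToK Fq P) = φ Fq P := rfl
  have hconv := hξ.2 n
  rw [← hv.absoluteValue_toL, hv.kabs_polyToK, hv.kabs_polyToK, map_sub, map_div₀, hφ, hφ, hq,
    hq, mul_inv] at hconv
  have hfactor : cfRemainder (φ Fq) (toL Fq ξ) a (n + 1) = φ Fq (qSeq Fq a (n + 1)) *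
      (toL Fq ξ - φ Fq (pSeq Fq a (n + 1)) / φ Fq (qSeq Fq a (n + 1))) := by
    rw [cfRemainder]
    field_simp
  rw [hfactor, map_mul, hconv, hq, mul_inv_cancel_left₀ (h.rpow_pos _).ne',
    Real.rpow_neg h.pos.le]

theorem hasGrowthRatio_floor_pow {w : ℝ} (hw : 1 < w) :
    HasGrowthRatio (fun i => (⌊w ^ i⌋₊ : ℝ)) w := by
  have hpow : HasGrowthRatio (fun i => w ^ i) w := by
    refine ⟨tendsto_pow_atTop_atTop_of_one_lt hw, tendsto_const_nhds.congr fun i => ?_⟩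
    rw [pow_succ]
    field_simp
  exact hpow.of_tendsto_div one_pos (tendsto_nat_floor_div_atTop.comp hpow.tendsto_atTop)

theorem five_add_sqrt_lt_of_nine_add_sqrt_lt {w : ℝ} (hw : (9 + √65) / 2 < w) :
    (5 + √17) / 2 < w := by
  have : √17 < √65 := Real.sqrt_lt_sqrt (by norm_num) (by norm_num)
  linarith

theorem isBlockSeq_floor_pow {A : Type*} {a : ℕ → A} {b c : A} {w : ℝ} (hw : 1 ≤ w)
    (hac : ∀ n : ℕ, 1 ≤ n → (∃ i : ℕ, (n : ℤ) = ⌊w ^ i⌋) → a n = c)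
    (hab : ∀ n : ℕ, 1 ≤ n → (¬ ∃ i : ℕ, (n : ℤ) = ⌊w ^ i⌋) → a n = b) :
    IsBlockSeq a b c fun i => ⌊w ^ i⌋₊ := by
  have hfloor (i : ℕ) : (⌊w ^ i⌋₊ : ℤ) = ⌊w ^ i⌋ := Int.natCast_floor_eq_floor (by positivity)
  have hmono : Monotone fun i : ℕ => ⌊w ^ i⌋₊ :=
    fun i j hij => Nat.floor_mono (pow_le_pow_right₀ hw hij)
  refine ⟨fun i => hac _ ?_ ⟨i, hfloor i⟩, fun i j hij hji => hab j (Nat.one_le_of_lt hij) ?_⟩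
  · exact Nat.le_floor (by simpa using one_le_pow₀ hw)
  · rintro ⟨l, hl⟩
    rw [← hfloor, Nat.cast_inj] at hl
    subst hl
    have := hmono.reflect_lt hij
    have := hmono.reflect_lt hji
    lia

theorem stmt0_general (Fq : Type) [Field Fq] [Fintype Fq] (v : L Fq → ℝ) (hv : IsAbsExt Fq v)
    (w : ℝ) (hw : (5 + √17) / 2 < w) (b c : Fq[X]) (hbc : b ≠ c) (a : ℕ → Fq[X]) (ha0 : a 0 = 0)
    (N : ℕ → ℕ) (hN : HasGrowthRatio (fun i => (N i : ℝ)) w) (ha : IsBlockSeq a b c N)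
    (ξ : K Fq) (hξ : IsCFOf Fq ξ a) :
    wStarExp Fq v 2 ξ = ((w - 1 : ℝ) : EReal) ∧ wExp Fq 2 ξ = ((w : ℝ) : EReal) := by
  have hw4 := four_lt_of_five_add_sqrt_lt hw
  obtain ⟨F, β, γ, hF⟩ := (hξ.isDegreeCF hv).exists_isQuadApproxSeq hv.isDegreeAbs ha0 hbc ha hN
    (by linarith)
  exact hF.exponents_eq hv hw

end Main

theorem stmt0 (Fq : Type) [Field Fq] [Fintype Fq]
    (v : L Fq → ℝ) (hv : IsAbsExt Fq v) (w : ℝ)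
    (hw1 : ringChar Fq ≠ 2 → (5 + Real.sqrt 17) / 2 < w)
    (hw2 : ringChar Fq = 2 → (9 + Real.sqrt 65) / 2 < w)
    (b c : Polynomial Fq) (hbc : b ≠ c) (hb : 1 ≤ b.natDegree) (hc : 1 ≤ c.natDegree)
    (a : ℕ → Polynomial Fq) (ha0 : a 0 = 0)
    (hac : ∀ n : ℕ, 1 ≤ n → (∃ i : ℕ, (n : ℤ) = ⌊w ^ i⌋) → a n = c)
    (hab : ∀ n : ℕ, 1 ≤ n → (¬ ∃ i : ℕ, (n : ℤ) = ⌊w ^ i⌋) → a n = b)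
    (ξ : K Fq) (hξ : IsCFOf Fq ξ a) :
    wStarExp Fq v 2 ξ = ((w - 1 : ℝ) : EReal) ∧ wExp Fq 2 ξ = ((w : ℝ) : EReal) := by
  have hw : (5 + √17) / 2 < w :=
    (eq_or_ne (ringChar Fq) 2).elim (fun h => five_add_sqrt_lt_of_nine_add_sqrt_lt (hw2 h)) hw1
  have hw4 := four_lt_of_five_add_sqrt_lt hw
  exact stmt0_general Fq v hv w hw b c hbc a ha0 _ (hasGrowthRatio_floor_pow (by linarith))
    (isBlockSeq_floor_pow (by linarith) hac hab) ξ hξ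

end Ooto
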